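/- arXiv:1012.1838 — 2 statements merged into one kernel-verified Lean document; each statement's English description precedes it below -/
import Mathlib

section
/- Let S be a smooth cubic surface in P^3 over R with S(R) ≠ ∅. If S(R) has one connected component then H^0_S(R) = 0. If S(R) has two connected components (one convex and one non-convex) then H^0_S(R) ≅ Z/2Z; explicitly, fixing a point P_0 on the non-convex component, the map sending [P − P_0] to 0 if P lies on the non-convex component and to 1 if P lies on the convex component extends to an isomorphism H^0_S(R) ≅ Z/2Z. -/
/- Common framework: points, lines, intersection divisors, the secant-tangent span,
the groups `H_S(K)`, geometric notions over the algebraic closure, and topologies. -/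

open MvPolynomial

noncomputable section

namespace CubicSurf

variable {K L : Type*} [Field K] [Field L] {n : ℕ}

/-- The set of `K`-rational points of the projective hypersurface `F = 0`. -/
def zeroSet (F : MvPolynomial (Fin n) K) : Set (Projectivization K (Fin n → K)) :=
  {P | eval P.rep F = 0}

/-- The binary form obtained by restricting `F` to the line spanned by `u` and `v`,
via the parametrization `(s : t) ↦ s • u + t • v`. -/
def lineRestrict (F : MvPolynomial (Fin n) K) (u v : Fin n → K) : MvPolynomial (Fin 2) K :=
  aeval (fun i => C (u i) * X 0 + C (v i) * X 1) F

/-- A projective line: a 2-dimensional linear subspace of `K^n`. -/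
def IsLine (W : Submodule K (Fin n → K)) : Prop := Module.finrank K W = 2

/-- The line `W` lies (geometrically) on the hypersurface `F = 0`. -/
def LineOnSurf (F : MvPolynomial (Fin n) K) (W : Submodule K (Fin n → K)) : Prop :=
  ∀ u v : Fin n → K, u ∈ W → v ∈ W → lineRestrict F u v = 0

/-- The projective point `P` lies on the line `W`. -/
def OnLine (W : Submodule K (Fin n → K)) (P : Projectivization K (Fin n → K)) : Prop :=
  P.rep ∈ W

/-- The set of `K`-points of the line `W`. -/
def linePts (W : Submodule K (Fin n → K)) : Set (Projectivization K (Fin n → K)) :=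
  {P | OnLine W P}

/-- `ℓ · S = P + Q + R`: the intersection divisor (with multiplicities) of the line `W`
with the hypersurface `F = 0` is `P + Q + R`. -/
def MeetsIn (F : MvPolynomial (Fin n) K) (W : Submodule K (Fin n → K))
    (P Q R : Projectivization K (Fin n → K)) : Prop :=
  ∃ (u v : Fin n → K) (_ : u ∈ W) (_ : v ∈ W) (_ : LinearIndependent K ![u, v])
    (c : K) (l m : Fin 3 → K) (h : ∀ k, l k • u + m k • v ≠ 0),
      c ≠ 0 ∧
      lineRestrict F u v = C c * ∏ k : Fin 3, (C (m k) * X 0 - C (l k) * X 1) ∧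
      Projectivization.mk K _ (h 0) = P ∧
      Projectivization.mk K _ (h 1) = Q ∧
      Projectivization.mk K _ (h 2) = R

/-- Membership in the span of a set of points under the secant/tangent process:
the smallest subset of `S(K)` containing `B` such that whenever `P`, `Q` are in it and a
`K`-line `ℓ ⊄ S` satisfies `ℓ·S = P+Q+R` with `R ∈ S(K)`, then `R` is in it. -/
inductive SpanMem (F : MvPolynomial (Fin n) K) (B : Set (Projectivization K (Fin n → K))) :
    Projectivization K (Fin n → K) → Prop
  | base (P : Projectivization K (Fin n → K)) (hP : P ∈ B) : SpanMem F B P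
  | secant (P Q R : Projectivization K (Fin n → K)) (W : Submodule K (Fin n → K))
      (hW : IsLine W) (hWS : ¬ LineOnSurf F W) (hP : SpanMem F B P) (hQ : SpanMem F B Q)
      (hR : R ∈ zeroSet F) (hm : MeetsIn F W P Q R) : SpanMem F B R

/-- The span of a set of points under the secant/tangent process. -/
def Span (F : MvPolynomial (Fin n) K) (B : Set (Projectivization K (Fin n → K))) :
    Set (Projectivization K (Fin n → K)) :=
  {P | SpanMem F B P}

/-- Smoothness of the projective hypersurface `F = 0`: over the algebraic closure there is
no nonzero common zero of `F` and all of its partial derivatives. -/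
def IsSmoothHypersurf (F : MvPolynomial (Fin n) K) : Prop :=
  ∀ v : Fin n → AlgebraicClosure K,
    eval v (MvPolynomial.map (algebraMap K (AlgebraicClosure K)) F) = 0 →
    (∀ i, eval v (pderiv i (MvPolynomial.map (algebraMap K (AlgebraicClosure K)) F)) = 0) →
    v = 0

/-- A smooth cubic hypersurface. -/
def SmoothCubic (F : MvPolynomial (Fin n) K) : Prop :=
  F.IsHomogeneous 3 ∧ IsSmoothHypersurf F

/-- The linear form cutting out the tangent plane `Π_P` of `F = 0` at `P`,
evaluated at the representative of a point `Q`; `Q ∈ Π_P` iff this vanishes. -/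
def tangentEval (F : MvPolynomial (Fin n) K) (P Q : Projectivization K (Fin n → K)) : K :=
  ∑ i, eval P.rep (pderiv i F) * Q.rep i

/-- The set of `K`-points of the tangent plane `Π_P`. -/
def tangentPlanePts (F : MvPolynomial (Fin n) K) (P : Projectivization K (Fin n → K)) :
    Set (Projectivization K (Fin n → K)) :=
  {Q | tangentEval F P Q = 0}

/-- The set of `K`-points of `Γ_P = S ∩ Π_P`. -/
def GammaPts (F : MvPolynomial (Fin n) K) (P : Projectivization K (Fin n → K)) :
    Set (Projectivization K (Fin n → K)) :=
  zeroSet F ∩ tangentPlanePts F P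

/-! ### Base change along a field embedding -/

/-- Base change of a vector along a field embedding. -/
def clVec (φ : K →+* L) (v : Fin n → K) : Fin n → L := fun i => φ (v i)

lemma clVec_ne_zero (φ : K →+* L) {v : Fin n → K} (hv : v ≠ 0) : clVec φ v ≠ 0 := by
  intro h
  apply hv
  funext i
  have := congrFun h i
  simpa [clVec] using φ.injective (by simpa [clVec] using this)

/-- Base change of a projective point along a field embedding. -/
def clPt (φ : K →+* L) (P : Projectivization K (Fin n → K)) :
    Projectivization L (Fin n → L) :=
  Projectivization.mk L (clVec φ P.rep) (clVec_ne_zero φ P.rep_nonzero)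

lemma eval_smul_of_isHomogeneous {R : Type*} [CommSemiring R] {F : MvPolynomial (Fin n) R}
    {d : ℕ} (hF : F.IsHomogeneous d) (a : R) (w : Fin n → R) :
    eval (a • w) F = a ^ d * eval w F := by
  classical
  rw [eval_eq', eval_eq', Finset.mul_sum]
  refine Finset.sum_congr rfl fun s hs => ?_
  have hdeg : ∑ i, s i = d := by
    have h1 := hF (MvPolynomial.mem_support_iff.mp hs)
    rw [Finsupp.weight_apply] at h1
    rw [← h1, Finsupp.sum_fintype]
    · simp
    · intro i; simp
  have key : ∀ i : Fin n, (a • w) i ^ s i = a ^ s i * w i ^ s i := by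
    intro i; simp [mul_pow]
  rw [Finset.prod_congr rfl (fun i _ => key i), Finset.prod_mul_distrib,
    Finset.prod_pow_eq_pow_sum, hdeg]
  ring

lemma clVec_eval (φ : K →+* L) (F : MvPolynomial (Fin n) K) (v : Fin n → K) :
    eval (clVec φ v) (MvPolynomial.map φ F) = φ (eval v F) := by
  rw [eval_map]
  have h : φ (eval v F) = φ (eval₂Hom (RingHom.id K) v F) := rfl
  rw [h, map_eval₂Hom]
  rfl

/-- A point given by a vector on which a homogeneous `F` vanishes lies in the zero set. -/
lemma mk_mem_zeroSet {F : MvPolynomial (Fin n) K} {d : ℕ} (hF : F.IsHomogeneous d)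
    {v : Fin n → K} (hv : v ≠ 0) (h : eval v F = 0) :
    Projectivization.mk K v hv ∈ zeroSet F := by
  obtain ⟨a, ha⟩ := Projectivization.exists_smul_eq_mk_rep K v hv
  show eval (Projectivization.mk K v hv).rep F = 0
  have hrep : (Projectivization.mk K v hv).rep = (a : K) • v := by
    rw [← ha, Units.smul_def]
  rw [hrep, eval_smul_of_isHomogeneous hF, h, mul_zero]

lemma clPt_mem_zeroSet (φ : K →+* L) {F : MvPolynomial (Fin n) K} {d : ℕ}
    (hF : F.IsHomogeneous d) {P : Projectivization K (Fin n → K)} (hP : P ∈ zeroSet F) :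
    clPt φ P ∈ zeroSet (MvPolynomial.map φ F) := by
  apply mk_mem_zeroSet (hF.map φ)
  rw [clVec_eval, hP, map_zero]

/-- The induced map on points of `S` under base change of the field. -/
def ptMap (φ : K →+* L) {F : MvPolynomial (Fin n) K} {d : ℕ} (hF : F.IsHomogeneous d)
    (P : zeroSet F) : zeroSet (MvPolynomial.map φ F) :=
  ⟨clPt φ P.1, clPt_mem_zeroSet φ hF P.2⟩

/-- A subspace of `L^n` is defined over `K` (w.r.t. `φ : K →+* L`) if it is spanned by
the base change of a `K`-subspace. -/
def DefinedOver (φ : K →+* L) (W : Submodule L (Fin n → L)) : Prop :=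
  ∃ W₀ : Submodule K (Fin n → K), W = Submodule.span L (clVec φ '' (W₀ : Set (Fin n → K)))

/-! ### Asymptotic lines, parabolic points, Eckardt points -/

/-- The line `W` is asymptotic to `F = 0` at `P`: the intersection multiplicity
`(ℓ · S)_P` is at least 3. -/
def AsymptoticAt (F : MvPolynomial (Fin n) K) (W : Submodule K (Fin n → K))
    (P : Projectivization K (Fin n → K)) : Prop :=
  IsLine W ∧ P.rep ∈ W ∧
    ∃ v ∈ W, LinearIndependent K ![P.rep, v] ∧
      ∃ c : K, lineRestrict F P.rep v = C c * (X 1) ^ 3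

/-- The set of asymptotic lines at `P`. -/
def AsymSet (F : MvPolynomial (Fin n) K) (P : Projectivization K (Fin n → K)) :
    Set (Submodule K (Fin n → K)) :=
  {W | AsymptoticAt F W P}

/-- A point of a hypersurface is parabolic (relative to the given field) if it does
not have exactly two distinct asymptotic lines (i.e. it has one or infinitely many). -/
def ParabolicAt (F : MvPolynomial (Fin n) K) (P : Projectivization K (Fin n → K)) : Prop :=
  ¬ ∃ W₁ W₂ : Submodule K (Fin n → K), W₁ ≠ W₂ ∧ AsymSet F P = {W₁, W₂}

/-- An Eckardt point (relative to the given field): three distinct lines lying on the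
surface pass through `P`. -/
def EckardtAt (F : MvPolynomial (Fin n) K) (P : Projectivization K (Fin n → K)) : Prop :=
  ∃ W₁ W₂ W₃ : Submodule K (Fin n → K), W₁ ≠ W₂ ∧ W₁ ≠ W₃ ∧ W₂ ≠ W₃ ∧
    (∀ W ∈ ({W₁, W₂, W₃} : Set (Submodule K (Fin n → K))),
      IsLine W ∧ LineOnSurf F W ∧ OnLine W P)

section geometric

variable (F : MvPolynomial (Fin n) K)

/-- `F` base changed to the algebraic closure of `K`. -/
def clF : MvPolynomial (Fin n) (AlgebraicClosure K) :=
  MvPolynomial.map (algebraMap K (AlgebraicClosure K)) F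

/-- A `K`-point of `S` is parabolic (a geometric notion, checked over `K̄`). -/
def IsParabolic (P : Projectivization K (Fin n → K)) : Prop :=
  ParabolicAt (clF F) (clPt (algebraMap K (AlgebraicClosure K)) P)

/-- A `K`-point of `S` is an Eckardt point (a geometric notion, checked over `K̄`). -/
def IsEckardt (P : Projectivization K (Fin n → K)) : Prop :=
  EckardtAt (clF F) (clPt (algebraMap K (AlgebraicClosure K)) P)

/-- A `K`-point of `S` is `K`-hyperbolic: it has exactly two asymptotic lines over `K̄`,
and both are defined over `K`. -/
def IsHyperbolic (P : Projectivization K (Fin n → K)) : Prop :=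
  ∃ W₁ W₂, W₁ ≠ W₂ ∧
    AsymSet (clF F) (clPt (algebraMap K (AlgebraicClosure K)) P) = {W₁, W₂} ∧
    DefinedOver (algebraMap K (AlgebraicClosure K)) W₁ ∧
    DefinedOver (algebraMap K (AlgebraicClosure K)) W₂

/-- A `K`-point of `S` is `K`-ternary: at least one of the asymptotic lines of `S`
through `P` is defined over `K`. -/
def IsTernary (P : Projectivization K (Fin n → K)) : Prop :=
  ∃ W ∈ AsymSet (clF F) (clPt (algebraMap K (AlgebraicClosure K)) P),
    DefinedOver (algebraMap K (AlgebraicClosure K)) W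

end geometric

/-! ### The group `H_S(K)` -/

variable (F : MvPolynomial (Fin n) K)

/-- `G_S(K)`: the free abelian group on the set `S(K)`. -/
abbrev GS := FreeAbelianGroup (zeroSet F)

/-- The degree homomorphism `G_S(K) → ℤ`, `Σ aᵢ Pᵢ ↦ Σ aᵢ`. -/
def degHom : GS F →+ ℤ := FreeAbelianGroup.lift fun _ => (1 : ℤ)

/-- `P + Q + R` is a "three point sum": either cut out on `S` with multiplicity by a
`K`-line not contained in `S`, or `P`, `Q`, `R` all lie on a `K`-line contained in `S`. -/
def TripleRel (P Q R : zeroSet F) : Prop :=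
  ∃ W : Submodule K (Fin n → K), IsLine W ∧
    ((¬ LineOnSurf F W ∧ MeetsIn F W P.1 Q.1 R.1) ∨
      (LineOnSurf F W ∧ OnLine W P.1 ∧ OnLine W Q.1 ∧ OnLine W R.1))

/-- `G'_S(K)`: the subgroup generated by all three point sums. -/
def Gp : AddSubgroup (GS F) :=
  AddSubgroup.closure {x | ∃ P Q R : zeroSet F, TripleRel F P Q R ∧
    x = FreeAbelianGroup.of P + FreeAbelianGroup.of Q + FreeAbelianGroup.of R}

/-- `G''_S(K)`: the degree-0 part of `G'_S(K)`. -/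
def Gpp : AddSubgroup (GS F) := Gp F ⊓ (degHom F).ker

/-- `H_S(K) = G_S(K)/G''_S(K)`. -/
abbrev HS := GS F ⧸ Gpp F

/-- The class `[P] ∈ H_S(K)` of a point `P ∈ S(K)`. -/
def HClass (P : zeroSet F) : HS F := QuotientAddGroup.mk' (Gpp F) (FreeAbelianGroup.of P)

/-- The degree homomorphism `H_S(K) → ℤ`. -/
def HdegHom : HS F →+ ℤ :=
  QuotientAddGroup.lift (Gpp F) (degHom F) (fun _ hx => hx.2)

/-- `H⁰_S(K)`: the degree-0 part of `H_S(K)`. -/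
def H0 : AddSubgroup (HS F) := (HdegHom F).ker

@[simp] lemma HdegHom_HClass (P : zeroSet F) : HdegHom F (HClass F P) = 1 := by
  simp [HdegHom, HClass, degHom]

/-- The class `[P] - [Q]`, as an element of `H⁰_S(K)`. -/
def H0diff (P Q : zeroSet F) : H0 F :=
  ⟨HClass F P - HClass F Q, by simp [H0, AddMonoidHom.mem_ker, map_sub]⟩

/-! ### mod-`p` dimensions and torsion -/

/-- `A/pA` for an abelian group `A`. -/
abbrev ModP (p : ℕ) (A : Type*) [AddCommGroup A] : Type _ :=
  A ⧸ (AddMonoidHom.range (nsmulAddMonoidHom p : A →+ A))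

instance ModP.instModule (p : ℕ) (A : Type*) [AddCommGroup A] : Module (ZMod p) (ModP p A) :=
  QuotientAddGroup.zmodModule (fun x => ⟨x, rfl⟩)

/-- `dim_{F_p} A/pA`. -/
def dimModP (p : ℕ) (A : Type*) [AddCommGroup A] : Cardinal := Module.rank (ZMod p) (ModP p A)

/-- The `k`-torsion subgroup `A[k]` of an abelian group `A`. -/
def torsion (k : ℕ) (A : Type*) [AddCommGroup A] : AddSubgroup A :=
  (nsmulAddMonoidHom k : A →+ A).ker

instance torsion.instModule (k : ℕ) (A : Type*) [AddCommGroup A] :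
    Module (ZMod k) (torsion k A) :=
  AddCommGroup.zmodModule (fun x => Subtype.ext x.2)

/-- `dim_{F_k} A[k]`: the dimension of the `k`-torsion subgroup (for `k` prime). -/
def dimTorsion (k : ℕ) (A : Type*) [AddCommGroup A] : Cardinal :=
  Module.rank (ZMod k) (torsion k A)

/-! ### Topologies -/

/-- The quotient topology on projective space induced by the topology of `K`. -/
def projTop (K : Type*) [Field K] [TopologicalSpace K] (n : ℕ) :
    TopologicalSpace (Projectivization K (Fin n → K)) :=
  TopologicalSpace.coinduced
    (fun v : {v : Fin n → K // v ≠ 0} => Projectivization.mk K v.1 v.2) inferInstance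

/-- The induced topology on the set of `K`-points of `S`. -/
def surfTop (F : MvPolynomial (Fin n) K) [TopologicalSpace K] :
    TopologicalSpace (zeroSet F) :=
  TopologicalSpace.induced Subtype.val (projTop K n)

/-- `K` (a topological field) is a local field: it is isomorphic, as a topological field,
to `ℝ`, to `ℂ`, or to a finite extension of `ℚ_p` for some prime `p` (with its canonical
topology, namely the `ℚ_p`-vector space topology). -/
def IsLocalField (K : Type*) [Field K] [TopologicalSpace K] : Prop :=
  (∃ e : K ≃+* ℝ, IsHomeomorph e) ∨ (∃ e : K ≃+* ℂ, IsHomeomorph e) ∨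
    (∃ (p : ℕ), p.Prime ∧ ∃ (_ : Fact p.Prime) (f : ℚ_[p] →+* K) (m : ℕ)
      (e : K ≃+ (Fin m → ℚ_[p])),
      (∀ (c : ℚ_[p]) (x : K), e (f c * x) = c • e x) ∧ IsHomeomorph e)

end CubicSurf

namespace CubicSurf

open MvPolynomial

/-- A subset `T` of `ℙ³(ℝ)` is *convex* if it avoids some projective plane `{φ = 0}`
and, in the affine chart `{φ = 1}`, it is the (relative) boundary of a convex set. -/
def ProjConvex (T : Set (Projectivization ℝ (Fin 4 → ℝ))) : Prop :=
  ∃ φ : (Fin 4 → ℝ) →ₗ[ℝ] ℝ, (∀ P ∈ T, φ P.rep ≠ 0) ∧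
    ∃ C : Set (Fin 4 → ℝ), Convex ℝ C ∧
      {v : Fin 4 → ℝ | φ v = 1 ∧ ∃ h : v ≠ 0, Projectivization.mk ℝ v h ∈ T} =
        intrinsicFrontier ℝ C

end CubicSurf

/-! ### Helper lemmas -/
namespace CubicSurf

open MvPolynomial

abbrev V4 := Fin 4 → ℝ

lemma pderiv_swap (i j : Fin 4) (F : MvPolynomial (Fin 4) ℝ) :
    pderiv i (pderiv j F) = pderiv j (pderiv i F) := by
  have h : ⁅(pderiv i : Derivation ℝ (MvPolynomial (Fin 4) ℝ) (MvPolynomial (Fin 4) ℝ)),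
      (pderiv j : Derivation ℝ (MvPolynomial (Fin 4) ℝ) (MvPolynomial (Fin 4) ℝ))⁆ = 0 := by
    apply MvPolynomial.derivation_ext
    intro k
    simp [Derivation.commutator_apply, pderiv_X, Pi.single_apply]
    split_ifs <;> simp
  have h2 := congrArg (fun D => D F) h
  simp only [Derivation.commutator_apply, Derivation.zero_apply] at h2
  exact sub_eq_zero.mp h2

/-- The symmetric trilinear form with `Tri F v v v = F v`. -/
def Tri (F : MvPolynomial (Fin 4) ℝ) (u v w : V4) : ℝ :=
  (1/6) * ∑ i, ∑ j, ∑ k, eval 0 (pderiv k (pderiv j (pderiv i F))) * u i * v j * w k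

variable {F : MvPolynomial (Fin 4) ℝ}

lemma Tri_swap12 (u v w : V4) : Tri F u v w = Tri F v u w := by
  unfold Tri
  refine congrArg (fun z => (1/6:ℝ) * z) ?_
  rw [Finset.sum_comm]
  refine Finset.sum_congr rfl fun i _ => Finset.sum_congr rfl fun j _ =>
    Finset.sum_congr rfl fun k _ => ?_
  rw [pderiv_swap i j]; ring

lemma Tri_swap23 (u v w : V4) : Tri F u v w = Tri F u w v := by
  unfold Tri
  refine congrArg (fun z => (1/6:ℝ) * z) ?_
  refine Finset.sum_congr rfl fun i _ => ?_
  rw [Finset.sum_comm]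
  refine Finset.sum_congr rfl fun j _ =>
    Finset.sum_congr rfl fun k _ => ?_
  rw [pderiv_swap j k]; ring

lemma Tri_add3 (u v w w' : V4) : Tri F u v (w + w') = Tri F u v w + Tri F u v w' := by
  unfold Tri
  rw [← mul_add]
  simp only [← Finset.sum_add_distrib]
  congr 1
  refine Finset.sum_congr rfl fun i _ => Finset.sum_congr rfl fun j _ =>
    Finset.sum_congr rfl fun k _ => ?_
  simp only [Pi.add_apply]; ring

lemma Tri_smul3 (a : ℝ) (u v w : V4) : Tri F u v (a • w) = a * Tri F u v w := by
  unfold Tri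
  rw [mul_left_comm]
  simp only [Finset.mul_sum]
  refine Finset.sum_congr rfl fun i _ => Finset.sum_congr rfl fun j _ =>
    Finset.sum_congr rfl fun k _ => ?_
  simp only [Pi.smul_apply, smul_eq_mul]; ring

lemma Tri_add2 (u v v' w : V4) : Tri F u (v + v') w = Tri F u v w + Tri F u v' w := by
  rw [Tri_swap23, Tri_add3, Tri_swap23 u w v, Tri_swap23 u w v']

lemma Tri_smul2 (a : ℝ) (u v w : V4) : Tri F u (a • v) w = a * Tri F u v w := by
  rw [Tri_swap23, Tri_smul3, Tri_swap23 u w v]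

lemma Tri_add1 (u u' v w : V4) : Tri F (u + u') v w = Tri F u v w + Tri F u' v w := by
  rw [Tri_swap12, Tri_add2, Tri_swap12 v u, Tri_swap12 v u']

lemma Tri_smul1 (a : ℝ) (u v w : V4) : Tri F (a • u) v w = a * Tri F u v w := by
  rw [Tri_swap12, Tri_smul2, Tri_swap12 v u]

lemma Tri_continuous {X : Type*} [TopologicalSpace X] {f g h : X → V4}
    (hf : Continuous f) (hg : Continuous g) (hh : Continuous h) :
    Continuous fun x => Tri F (f x) (g x) (h x) := by
  unfold Tri
  fun_prop

/-- Linear functional `Tri F u v`. -/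
def TriL (F : MvPolynomial (Fin 4) ℝ) (u v : V4) : V4 →ₗ[ℝ] ℝ where
  toFun := Tri F u v
  map_add' := Tri_add3 u v
  map_smul' := fun a w => Tri_smul3 a u v w

lemma euler_eval {d : ℕ} {G : MvPolynomial (Fin 4) ℝ} (hG : G.IsHomogeneous d) (v : V4) :
    ∑ i, v i * eval v (pderiv i G) = d * eval v G := by
  have h := congrArg (eval v) hG.sum_X_mul_pderiv
  simpa using h

lemma eval_const {G : MvPolynomial (Fin 4) ℝ} (hG : G.IsHomogeneous 0) (v : V4) :
    eval v G = eval 0 G := by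
  have h := eval_smul_of_isHomogeneous hG 0 v
  simpa using h.symm

lemma pderiv_eval (hF : F.IsHomogeneous 3) (v : V4) (i : Fin 4) :
    eval v (pderiv i F) = (1/2) * ∑ j, ∑ k,
      eval 0 (pderiv k (pderiv j (pderiv i F))) * v j * v k := by
  have h1 : (pderiv i F).IsHomogeneous 2 := hF.pderiv
  have h2 : ∀ j, (pderiv j (pderiv i F)).IsHomogeneous 1 := fun j => h1.pderiv
  have h3 : ∀ j k, (pderiv k (pderiv j (pderiv i F))).IsHomogeneous 0 := fun j k => (h2 j).pderiv
  have e1 := euler_eval h1 v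
  have e2 := fun j => euler_eval (h2 j) v
  have : ∑ j, ∑ k, eval 0 (pderiv k (pderiv j (pderiv i F))) * v j * v k
      = 2 * eval v (pderiv i F) := by
    rw [show (2:ℝ) = ((2:ℕ):ℝ) by norm_num, ← e1]
    refine Finset.sum_congr rfl fun j _ => ?_
    have := e2 j
    simp only [Nat.cast_one, one_mul] at this
    rw [← this, Finset.mul_sum]
    refine Finset.sum_congr rfl fun k _ => ?_
    rw [eval_const (h3 j k) v]; ring
  rw [this]; ring

lemma pderiv_sum (hF : F.IsHomogeneous 3) (p x : V4) :
    ∑ i, eval p (pderiv i F) * x i = 3 * Tri F p p x := by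
  rw [Tri_swap23, Tri_swap12]
  unfold Tri
  rw [← mul_assoc, Finset.mul_sum]
  refine Finset.sum_congr rfl fun i _ => ?_
  rw [pderiv_eval hF, mul_assoc, Finset.sum_mul, Finset.mul_sum, Finset.mul_sum]
  refine Finset.sum_congr rfl fun j _ => ?_
  rw [Finset.sum_mul, Finset.mul_sum, Finset.mul_sum]
  refine Finset.sum_congr rfl fun k _ => ?_
  ring

lemma eval_eq_Tri (hF : F.IsHomogeneous 3) (v : V4) : eval v F = Tri F v v v := by
  have h := euler_eval hF v
  have h2 := pderiv_sum hF v v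
  have : ∑ i, v i * eval v (pderiv i F) = ∑ i, eval v (pderiv i F) * v i :=
    Finset.sum_congr rfl fun i _ => mul_comm _ _
  rw [this, h2] at h
  push_cast at h
  linarith

lemma eval_comb (hF : F.IsHomogeneous 3) (u v : V4) (s t : ℝ) :
    eval (s • u + t • v) F = s^3 * eval u F + 3 * s^2 * t * Tri F u u v
      + 3 * s * t^2 * Tri F u v v + t^3 * eval v F := by
  simp only [eval_eq_Tri hF, Tri_add1, Tri_add2, Tri_add3, Tri_smul1, Tri_smul2, Tri_smul3]
  rw [Tri_swap12 v u u, Tri_swap23 u v u, Tri_swap23 v v u, Tri_swap12 v u v]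
  ring

lemma Tri_comb (u v w : V4) (s t : ℝ) :
    Tri F (s • u + t • v) (s • u + t • v) w = s^2 * Tri F u u w + 2 * s * t * Tri F u v w
      + t^2 * Tri F v v w := by
  simp only [Tri_add1, Tri_add2, Tri_smul1, Tri_smul2]
  rw [Tri_swap12 v u w]
  ring

lemma smooth_real (hF : SmoothCubic F) {w : V4} (hw : w ≠ 0) (h0 : eval w F = 0) :
    ∃ y, Tri F w w y ≠ 0 := by
  by_contra hcon
  push Not at hcon
  have hz := hF.2 (clVec (algebraMap ℝ (AlgebraicClosure ℝ)) w)
    (by rw [clVec_eval, h0, map_zero]) (by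
      intro i
      rw [pderiv_map, clVec_eval]
      have := pderiv_sum hF.1 w (Pi.single i 1)
      rw [hcon] at this
      simp [Pi.single_apply] at this
      rw [this, map_zero])
  exact clVec_ne_zero _ hw hz

lemma lineRestrict_eval (F : MvPolynomial (Fin 4) ℝ) (u v : V4) (x : Fin 2 → ℝ) :
    eval x (lineRestrict F u v) = eval (x 0 • u + x 1 • v) F := by
  unfold lineRestrict
  have h : (eval x).comp (aeval (fun i => C (u i) * X 0 + C (v i) * X 1) :
      MvPolynomial (Fin 4) ℝ →ₐ[ℝ] MvPolynomial (Fin 2) ℝ).toRingHom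
      = eval (x 0 • u + x 1 • v) := by
    apply MvPolynomial.ringHom_ext
    · intro r; simp
    · intro i; simp [mul_comm]
  exact congrArg (fun f => f F) h

end CubicSurf

namespace CubicSurf

open MvPolynomial

variable {F : MvPolynomial (Fin 4) ℝ}

/-- The cone over a set of projective points. -/
def cone (U : Set (Projectivization ℝ V4)) : Set V4 :=
  {v | ∃ h : v ≠ 0, Projectivization.mk ℝ v h ∈ U}

lemma mk_smul_eq {a : ℝ} (_ha : a ≠ 0) {v w : V4} (hv : v ≠ 0) (hw : w ≠ 0) (h : w = a • v) :
    Projectivization.mk ℝ w hw = Projectivization.mk ℝ v hv := by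
  rw [Projectivization.mk_eq_mk_iff']
  exact ⟨a, h.symm⟩

lemma cone_smul {U : Set (Projectivization ℝ V4)} {a : ℝ} (ha : a ≠ 0) {v : V4} :
    a • v ∈ cone U ↔ v ∈ cone U := by
  constructor
  · rintro ⟨h, hU⟩
    have hv : v ≠ 0 := fun h0 => h (by rw [h0, smul_zero])
    exact ⟨hv, by rwa [← mk_smul_eq ha hv h rfl]⟩
  · rintro ⟨hv, hU⟩
    have h : a • v ≠ 0 := smul_ne_zero ha hv
    exact ⟨h, by rwa [mk_smul_eq ha hv h rfl]⟩

lemma rep_mem_cone {U : Set (Projectivization ℝ V4)} {P : Projectivization ℝ V4} :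
    P.rep ∈ cone U ↔ P ∈ U := by
  constructor
  · rintro ⟨h, hU⟩
    rwa [Projectivization.mk_rep] at hU
  · intro h
    exact ⟨P.rep_nonzero, by rwa [Projectivization.mk_rep]⟩

lemma mk_rep_smul (v : V4) (hv : v ≠ 0) :
    ∃ a : ℝ, a ≠ 0 ∧ (Projectivization.mk ℝ v hv).rep = a • v := by
  obtain ⟨a, ha⟩ := Projectivization.exists_smul_eq_mk_rep ℝ v hv
  exact ⟨a, a.ne_zero, by rw [← ha, Units.smul_def]⟩

lemma mk_mem_iff (hF : F.IsHomogeneous 3) {v : V4} (hv : v ≠ 0) :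
    Projectivization.mk ℝ v hv ∈ zeroSet F ↔ eval v F = 0 := by
  obtain ⟨a, ha, h⟩ := mk_rep_smul v hv
  constructor
  · intro h1
    have h2 : eval (Projectivization.mk ℝ v hv).rep F = 0 := h1
    rw [h, eval_smul_of_isHomogeneous hF] at h2
    exact (mul_eq_zero.mp h2).resolve_left (pow_ne_zero _ ha)
  · exact mk_mem_zeroSet hF hv

lemma LI_of_ne {P Q : Projectivization ℝ V4} (h : P ≠ Q) :
    LinearIndependent ℝ ![P.rep, Q.rep] := by
  rw [LinearIndependent.pair_iff' P.rep_nonzero]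
  intro a ha
  apply h
  have ha0 : a ≠ 0 := by
    rintro rfl
    rw [zero_smul] at ha
    exact Q.rep_nonzero ha.symm
  rw [← P.mk_rep, ← Q.mk_rep]
  exact (mk_smul_eq ha0 _ _ ha.symm).symm

lemma LI_comb {u v : V4} (h : LinearIndependent ℝ ![u, v]) {s t : ℝ} (h0 : s • u + t • v = 0) :
    s = 0 ∧ t = 0 := LinearIndependent.pair_iff.mp h s t h0

lemma rep_zero (P : zeroSet F) : eval P.1.rep F = 0 := P.2

lemma triple_of (hF : F.IsHomogeneous 3) {p x : V4} (hLI : LinearIndependent ℝ ![p, x])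
    (c : ℝ) (l m : Fin 3 → ℝ) (h : ∀ k, l k • p + m k • x ≠ 0)
    (hc : ∀ s t : ℝ, eval (s • p + t • x) F = c * ∏ k, (m k * s - l k * t))
    {P Q R : zeroSet F} (hP : Projectivization.mk ℝ _ (h 0) = P.1)
    (hQ : Projectivization.mk ℝ _ (h 1) = Q.1) (hR : Projectivization.mk ℝ _ (h 2) = R.1) :
    TripleRel F P Q R := by
  have hp : p ∈ Submodule.span ℝ {p, x} := Submodule.subset_span (by simp)
  have hx : x ∈ Submodule.span ℝ {p, x} := Submodule.subset_span (by simp)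
  have hL : lineRestrict F p x = C c * ∏ k : Fin 3, (C (m k) * X 0 - C (l k) * X 1) := by
    apply MvPolynomial.funext
    intro z
    rw [lineRestrict_eval, hc]
    simp
  refine ⟨Submodule.span ℝ {p, x}, ?_, ?_⟩
  · have := finrank_span_eq_card hLI
    rw [show Set.range ![p, x] = {p, x} by simp [Set.pair_comm]] at this
    simpa [IsLine] using this
  · by_cases hc0 : c = 0
    · right
      have hon : ∀ k, OnLine (Submodule.span ℝ {p, x}) (Projectivization.mk ℝ _ (h k)) := by
        intro k
        obtain ⟨a, -, ha⟩ := mk_rep_smul _ (h k)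
        unfold OnLine
        rw [ha]
        exact Submodule.smul_mem _ _ (Submodule.add_mem _ (Submodule.smul_mem _ _ hp)
          (Submodule.smul_mem _ _ hx))
      refine ⟨?_, hP ▸ hon 0, hQ ▸ hon 1, hR ▸ hon 2⟩
      intro u v hu hv
      apply MvPolynomial.funext
      intro z
      rw [lineRestrict_eval, map_zero]
      have hz : z 0 • u + z 1 • v ∈ Submodule.span ℝ {p, x} :=
        Submodule.add_mem _ (Submodule.smul_mem _ _ hu) (Submodule.smul_mem _ _ hv)
      obtain ⟨s, t, hst⟩ := Submodule.mem_span_pair.mp hz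
      rw [← hst, hc, hc0, zero_mul]
    · left
      refine ⟨?_, p, x, hp, hx, hLI, c, l, m, h, hc0, hL, hP, hQ, hR⟩
      intro hon
      have h0 := hon p x hp hx
      have hz : ∀ s t : ℝ, (∏ k, (m k * s - l k * t)) = 0 := by
        intro s t
        have := hc s t
        have h1 := lineRestrict_eval F p x ![s, t]
        rw [h0] at h1
        simp only [map_zero, Matrix.cons_val_zero, Matrix.cons_val_one] at h1
        rw [← h1] at this
        exact (mul_eq_zero.mp this.symm).resolve_left hc0
      have hpoly : (∏ k : Fin 3, (C (m k) * X 0 - C (l k) * X 1 : MvPolynomial (Fin 2) ℝ)) = 0 := by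
        apply MvPolynomial.funext
        intro z
        simpa using hz (z 0) (z 1)
      rw [Finset.prod_eq_zero_iff] at hpoly
      obtain ⟨k, -, hk⟩ := hpoly
      have h1 := congrArg (eval ![1, 0]) hk
      have h2 := congrArg (eval ![0, 1]) hk
      simp at h1 h2
      apply h k
      rw [h1, h2]; simp

lemma triple_tangent (hF : F.IsHomogeneous 3) {P Q : zeroSet F} (hne : P ≠ Q)
    (h : Tri F P.1.rep P.1.rep Q.1.rep = 0) : TripleRel F P P Q := by
  have hne' : P.1 ≠ Q.1 := fun h => hne (Subtype.ext h)
  refine triple_of hF (LI_of_ne hne') (3 * Tri F P.1.rep Q.1.rep Q.1.rep) ![1, 1, 0] ![0, 0, 1]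
    ?_ ?_ (P := P) (Q := P) (R := Q) ?_ ?_ ?_
  · intro k
    fin_cases k <;> simp [Projectivization.rep_nonzero]
  · intro s t
    rw [eval_comb hF, rep_zero, rep_zero, h, Fin.prod_univ_three]
    simp
    ring
  all_goals simp [Projectivization.mk_rep]

lemma triple_self (hF : F.IsHomogeneous 3) {P : zeroSet F} {y : V4}
    (hLI : LinearIndependent ℝ ![P.1.rep, y])
    (h : Tri F P.1.rep P.1.rep y = 0) (h2 : Tri F P.1.rep y y = 0) : TripleRel F P P P := by
  refine triple_of hF hLI (- eval y F) ![1, 1, 1] ![0, 0, 0]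
    ?_ ?_ (P := P) (Q := P) (R := P) ?_ ?_ ?_
  · intro k
    fin_cases k <;> simp [Projectivization.rep_nonzero]
  · intro s t
    rw [eval_comb hF, rep_zero, h, h2, Fin.prod_univ_three]
    simp
    ring
  all_goals simp [Projectivization.mk_rep]

lemma triple_third (hF : F.IsHomogeneous 3) {P : zeroSet F} {y : V4}
    (hLI : LinearIndependent ℝ ![P.1.rep, y]) (h : Tri F P.1.rep P.1.rep y = 0) :
    ∃ Q : zeroSet F, TripleRel F P P Q ∧ ∃ s t : ℝ, Q.1.rep = s • P.1.rep + t • y := by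
  by_cases hb : Tri F P.1.rep y y = 0
  · exact ⟨P, triple_self hF hLI h hb, 1, 0, by simp⟩
  set p := P.1.rep with hp
  have hq : (eval y F) • p + (-3 * Tri F p y y) • y ≠ 0 := by
    intro h0
    have := (LI_comb hLI h0).2
    apply hb
    linarith
  have hq0 : eval ((eval y F) • p + (-3 * Tri F p y y) • y) F = 0 := by
    rw [eval_comb hF, hp, rep_zero, ← hp, h]; ring
  refine ⟨⟨Projectivization.mk ℝ _ hq, mk_mem_zeroSet hF hq hq0⟩, ?_, ?_⟩
  · refine triple_of hF hLI (-1) ![1, 1, eval y F] ![0, 0, -3 * Tri F p y y]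
      ?_ ?_ ?_ ?_ ?_
    · intro k
      fin_cases k
      · simp [hp, Projectivization.rep_nonzero]
      · simp [hp, Projectivization.rep_nonzero]
      · simpa using hq
    · intro s t
      rw [eval_comb hF, hp, rep_zero, ← hp, h, Fin.prod_univ_three]
      simp
      ring
    · simp [hp, Projectivization.mk_rep]
    · simp [hp, Projectivization.mk_rep]
    · simp
  · obtain ⟨a, -, ha⟩ := mk_rep_smul _ hq
    refine ⟨a * eval y F, a * (-3 * Tri F p y y), ?_⟩
    show (Projectivization.mk ℝ _ hq).rep = _
    rw [ha, smul_add, smul_smul, smul_smul]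

lemma triple_secant (hF : F.IsHomogeneous 3) {P Q : zeroSet F} (hne : P ≠ Q) :
    ∃ R : zeroSet F, TripleRel F P Q R := by
  have hne' : P.1 ≠ Q.1 := fun h => hne (Subtype.ext h)
  have hLI := LI_of_ne hne'
  by_cases hab : Tri F P.1.rep P.1.rep Q.1.rep = 0
  · by_cases hb : Tri F P.1.rep Q.1.rep Q.1.rep = 0
    · refine ⟨P, triple_of hF hLI 0 ![1, 0, 1] ![0, 1, 0] ?_ ?_ ?_ ?_ ?_⟩
      · intro k
        fin_cases k <;> simp [Projectivization.rep_nonzero]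
      · intro s t
        rw [eval_comb hF, rep_zero, rep_zero, hab, hb]
        ring
      all_goals simp [Projectivization.mk_rep]
    · refine ⟨P, triple_of hF hLI (3 * Tri F P.1.rep Q.1.rep Q.1.rep) ![1, 0, 1] ![0, 1, 0]
        ?_ ?_ ?_ ?_ ?_⟩
      · intro k
        fin_cases k <;> simp [Projectivization.rep_nonzero]
      · intro s t
        rw [eval_comb hF, rep_zero, rep_zero, hab, Fin.prod_univ_three]
        simp
        ring
      all_goals simp [Projectivization.mk_rep]
  · set p := P.1.rep with hp
    set x := Q.1.rep with hx
    have hq : (Tri F p x x) • p + (- Tri F p p x) • x ≠ 0 := by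
      intro h0
      have := (LI_comb hLI h0).2
      apply hab
      linarith
    have hq0 : eval ((Tri F p x x) • p + (- Tri F p p x) • x) F = 0 := by
      rw [eval_comb hF, hp, rep_zero, hx, rep_zero]; ring
    refine ⟨⟨Projectivization.mk ℝ _ hq, mk_mem_zeroSet hF hq hq0⟩, ?_⟩
    refine triple_of hF hLI 3 ![1, 0, Tri F p x x] ![0, 1, - Tri F p p x]
      ?_ ?_ ?_ ?_ ?_
    · intro k
      fin_cases k
      · simp [hp, Projectivization.rep_nonzero]
      · simp [hx, Projectivization.rep_nonzero]
      · simpa using hq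
    · intro s t
      rw [eval_comb hF, hp, rep_zero, hx, rep_zero, ← hx, ← hp, Fin.prod_univ_three]
      simp
      ring
    · simp [hp, Projectivization.mk_rep]
    · simp [hx, Projectivization.mk_rep]
    · simp

/-! Algebra in `H_S` -/

lemma trip_eq {P Q R P' Q' R' : zeroSet F} (h : TripleRel F P Q R) (h' : TripleRel F P' Q' R') :
    HClass F P + HClass F Q + HClass F R = HClass F P' + HClass F Q' + HClass F R' := by
  unfold HClass
  simp only [← map_add]
  rw [← sub_eq_zero, ← map_sub]
  rw [QuotientAddGroup.mk'_apply, QuotientAddGroup.eq_zero_iff]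
  refine ⟨?_, ?_⟩
  · exact (Gp F).sub_mem (AddSubgroup.subset_closure ⟨_, _, _, h, rfl⟩)
      (AddSubgroup.subset_closure ⟨_, _, _, h', rfl⟩)
  · show degHom F _ = 0
    simp [degHom]

lemma exists_ker (f g : V4 →ₗ[ℝ] ℝ) (w : V4) :
    ∃ y, f y = 0 ∧ g y = 0 ∧ y ∉ Submodule.span ℝ {w} := by
  by_contra hcon
  push Not at hcon
  have hle : LinearMap.ker (f.prod g) ≤ Submodule.span ℝ {w} := by
    intro y hy
    have hy' : (f y, g y) = (0 : ℝ × ℝ) := hy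
    rw [Prod.mk_eq_zero] at hy'
    exact hcon y hy'.1 hy'.2
  have h1 := Submodule.finrank_mono hle
  have h2 : Module.finrank ℝ (Submodule.span ℝ {w}) ≤ 1 := by
    have := finrank_span_le_card (R := ℝ) ({w} : Set V4)
    simpa using this
  have h3 := LinearMap.finrank_range_add_finrank_ker (f.prod g)
  have h4 := Submodule.finrank_le (LinearMap.range (f.prod g))
  simp at h3 h4
  omega

lemma LI_of_not_mem {w y : V4} (hw : w ≠ 0) (hy : y ∉ Submodule.span ℝ {w}) :
    LinearIndependent ℝ ![w, y] := by
  rw [LinearIndependent.pair_iff' hw]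
  intro a ha
  exact hy (Submodule.mem_span_singleton.mpr ⟨a, ha⟩)

lemma real_root (hF : F.IsHomogeneous 3) (u v : V4) :
    ∃ s t : ℝ, (s ≠ 0 ∨ t ≠ 0) ∧ eval (s • u + t • v) F = 0 := by
  have hcont : Continuous fun θ : ℝ => eval (Real.cos θ • u + Real.sin θ • v) F := by
    have := MvPolynomial.continuous_eval F
    exact this.comp (by fun_prop)
  have hne : ∀ θ : ℝ, Real.cos θ ≠ 0 ∨ Real.sin θ ≠ 0 := by
    intro θ
    by_contra h
    push Not at h
    have := Real.sin_sq_add_cos_sq θ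
    rw [h.1, h.2] at this
    norm_num at this
  have h0 : eval (Real.cos 0 • u + Real.sin 0 • v) F = eval u F := by simp
  have h1 : eval (Real.cos Real.pi • u + Real.sin Real.pi • v) F = - eval u F := by
    rw [eval_comb hF]; simp; ring
  have key : (0:ℝ) ∈ (fun θ : ℝ => eval (Real.cos θ • u + Real.sin θ • v) F) ''
      (Set.uIcc 0 Real.pi) := by
    apply intermediate_value_uIcc hcont.continuousOn
    simp only [h0, h1, Set.mem_uIcc]
    rcases le_total (eval u F) 0 with h | h
    · left; constructor <;> linarith
    · right; constructor <;> linarith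
  obtain ⟨θ, -, hθ⟩ := key
  exact ⟨_, _, hne θ, hθ⟩

lemma TriL_apply (u v w : V4) : TriL F u v w = Tri F u v w := rfl

lemma exists_common_aux (hF : F.IsHomogeneous 3) (P P1 : zeroSet F)
    (h : Tri F P.1.rep P.1.rep P1.1.rep = 0) (h1 : Tri F P1.1.rep P1.1.rep P.1.rep ≠ 0) :
    ∃ Q : zeroSet F, TripleRel F P P Q ∧ TripleRel F P1 P1 Q := by
  obtain ⟨y, hy1, hy2, hy3⟩ := exists_ker (TriL F P.1.rep P.1.rep) (TriL F P1.1.rep P1.1.rep)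
    P1.1.rep
  rw [TriL_apply] at hy1 hy2
  obtain ⟨Q, hQ, s, t, hst⟩ := triple_third hF (LI_of_not_mem P1.1.rep_nonzero hy3) hy2
  have hself : Tri F P1.1.rep P1.1.rep P1.1.rep = 0 := by rw [← eval_eq_Tri hF]; exact P1.2
  refine ⟨Q, triple_tangent hF ?_ ?_, hQ⟩
  · rintro rfl
    apply h1
    rw [hst, Tri_add3, Tri_smul3, Tri_smul3, hy2, hself]; ring
  · rw [hst, Tri_add3, Tri_smul3, Tri_smul3, hy1, h]; ring

lemma exists_common (hF : F.IsHomogeneous 3) (P P1 : zeroSet F) :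
    ∃ Q : zeroSet F, TripleRel F P P Q ∧ TripleRel F P1 P1 Q := by
  have hself : ∀ P : zeroSet F, Tri F P.1.rep P.1.rep P.1.rep = 0 := by
    intro P; rw [← eval_eq_Tri hF]; exact P.2
  by_cases hPP : P = P1
  · subst hPP
    obtain ⟨y, hy1, -, hy3⟩ := exists_ker (TriL F P.1.rep P.1.rep) (TriL F P.1.rep P.1.rep) P.1.rep
    obtain ⟨Q, hQ, -⟩ := triple_third hF (LI_of_not_mem P.1.rep_nonzero hy3) hy1
    exact ⟨Q, hQ, hQ⟩
  have hne' : P.1 ≠ P1.1 := fun h => hPP (Subtype.ext h)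
  by_cases h : Tri F P.1.rep P.1.rep P1.1.rep = 0
  · by_cases h1 : Tri F P1.1.rep P1.1.rep P.1.rep = 0
    · refine ⟨P, triple_self hF (LI_of_ne hne') h ?_, triple_tangent hF (Ne.symm hPP) h1⟩
      rw [Tri_swap12, Tri_swap23]; exact h1
    · exact exists_common_aux hF P P1 h h1
  · by_cases h1 : Tri F P1.1.rep P1.1.rep P.1.rep = 0
    · obtain ⟨Q, hQ1, hQ2⟩ := exists_common_aux hF P1 P h1 h
      exact ⟨Q, hQ2, hQ1⟩
    · obtain ⟨u, hu1, hu2, hu3⟩ := exists_ker (TriL F P.1.rep P.1.rep)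
        (TriL F P1.1.rep P1.1.rep) 0
      obtain ⟨v, hv1, hv2, hv3⟩ := exists_ker (TriL F P.1.rep P.1.rep)
        (TriL F P1.1.rep P1.1.rep) u
      rw [TriL_apply] at hu1 hu2 hv1 hv2
      have hu0 : u ≠ 0 := by
        rintro rfl; exact hu3 (Submodule.zero_mem _)
      obtain ⟨s, t, hst, hroot⟩ := real_root hF u v
      have hq : s • u + t • v ≠ 0 := by
        intro h0
        have := LI_comb (LI_of_not_mem hu0 hv3) h0
        rcases hst with h | h
        · exact h this.1
        · exact h this.2
      obtain ⟨a, ha, har⟩ := mk_rep_smul _ hq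
      let Q : zeroSet F := ⟨Projectivization.mk ℝ _ hq, mk_mem_zeroSet hF hq hroot⟩
      have hQ : Tri F P.1.rep P.1.rep Q.1.rep = 0 := by
        show Tri F P.1.rep P.1.rep (Projectivization.mk ℝ _ hq).rep = 0
        rw [har, Tri_smul3, Tri_add3, Tri_smul3, Tri_smul3, hu1, hv1]; ring
      have hQ1 : Tri F P1.1.rep P1.1.rep Q.1.rep = 0 := by
        show Tri F P1.1.rep P1.1.rep (Projectivization.mk ℝ _ hq).rep = 0
        rw [har, Tri_smul3, Tri_add3, Tri_smul3, Tri_smul3, hu2, hv2]; ring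
      refine ⟨Q, triple_tangent hF ?_ hQ, triple_tangent hF ?_ hQ1⟩
      · intro hh
        apply h1
        rw [hh]; exact hQ1
      · intro hh
        apply h
        rw [hh]; exact hQ

lemma two_eq (hF : F.IsHomogeneous 3) (P P1 : zeroSet F) :
    HClass F P + HClass F P = HClass F P1 + HClass F P1 := by
  obtain ⟨Q, h1, h2⟩ := exists_common hF P P1
  exact add_right_cancel (trip_eq h1 h2)

lemma class_eq_of_double (hF : F.IsHomogeneous 3) {P P' Q Q' : zeroSet F}
    (h : TripleRel F P P Q) (h' : TripleRel F P' P' Q') : HClass F Q = HClass F Q' := by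
  have h1 := trip_eq h h'
  rw [two_eq hF P P'] at h1
  exact add_left_cancel h1

end CubicSurf

namespace CubicSurf

open MvPolynomial Filter Topology

variable {F : MvPolynomial (Fin 4) ℝ}

lemma cont_eval (F : MvPolynomial (Fin 4) ℝ) : Continuous fun v : V4 => eval v F :=
  MvPolynomial.continuous_eval F

lemma loc_of_open {A : Set (Projectivization ℝ V4)}
    (hA : @IsOpen (zeroSet F) (surfTop F) (Subtype.val ⁻¹' A)) (hF : F.IsHomogeneous 3)
    {v : V4} (hv : v ∈ cone A) (hv0 : eval v F = 0) :
    ∀ᶠ v' in 𝓝 v, eval v' F = 0 → v' ∈ cone A := by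
  obtain ⟨O, hO, hOA⟩ := (@isOpen_induced_iff _ _ (projTop ℝ 4) _ _).mp hA
  have hO' : IsOpen ((fun v : {v : V4 // v ≠ 0} => Projectivization.mk ℝ v.1 v.2) ⁻¹' O) :=
    isOpen_coinduced.mp hO
  obtain ⟨N, hN, hNO⟩ := isOpen_induced_iff.mp hO'
  have key : ∀ z : V4, ∀ hz : z ≠ 0, eval z F = 0 → (z ∈ N ↔ Projectivization.mk ℝ z hz ∈ A) := by
    intro z hz hz0
    have h1 : (⟨z, hz⟩ : {v : V4 // v ≠ 0}) ∈ Subtype.val ⁻¹' N ↔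
      (⟨z, hz⟩ : {v : V4 // v ≠ 0}) ∈
        (fun v : {v : V4 // v ≠ 0} => Projectivization.mk ℝ v.1 v.2) ⁻¹' O := by rw [hNO]
    have h2 : (⟨_, (mk_mem_iff hF hz).mpr hz0⟩ : zeroSet F) ∈ Subtype.val ⁻¹' O ↔
      (⟨_, (mk_mem_iff hF hz).mpr hz0⟩ : zeroSet F) ∈ Subtype.val ⁻¹' A := by rw [hOA]
    exact h1.trans h2
  obtain ⟨hvn, hvA⟩ := hv
  have hvN : v ∈ N := (key v hvn hv0).mpr hvA
  filter_upwards [hN.mem_nhds hvN, isOpen_ne.mem_nhds hvn] with z hzN hz hz0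
  exact ⟨hz, (key z hz hz0).mp hzN⟩

lemma open_of_loc (hF : F.IsHomogeneous 3) {A : Set (Projectivization ℝ V4)}
    (h : ∀ v ∈ cone A, eval v F = 0 → ∀ᶠ v' in 𝓝 v, eval v' F = 0 → v' ∈ cone A) :
    @IsOpen (zeroSet F) (surfTop F) (Subtype.val ⁻¹' A) := by
  let _ : TopologicalSpace (zeroSet F) := surfTop F
  let _ : TopologicalSpace (Projectivization ℝ V4) := projTop ℝ 4
  rw [isOpen_iff_mem_nhds]
  intro P hP
  have hP' : P.1.rep ∈ cone A := rep_mem_cone.mpr hP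
  obtain ⟨N, hN, hNo, hPN⟩ := mem_nhds_iff.mp (h _ hP' P.2)
  let O : Set (Projectivization ℝ V4) := {Q | ∃ a : ℝ, a ≠ 0 ∧ a • Q.rep ∈ N}
  have hO : IsOpen O := by
    refine isOpen_coinduced.mpr ?_
    have : ((fun v : {v : V4 // v ≠ 0} => Projectivization.mk ℝ v.1 v.2) ⁻¹' O)
        = ⋃ a : {a : ℝ // a ≠ 0}, {v : {v : V4 // v ≠ 0} | a.1 • v.1 ∈ N} := by
      ext ⟨v, hv⟩
      obtain ⟨b, hb, hbv⟩ := mk_rep_smul v hv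
      simp only [Set.mem_preimage, Set.mem_iUnion, O, Set.mem_ofPred_eq]
      rw [hbv]
      constructor
      · rintro ⟨a, ha, h⟩
        exact ⟨⟨a * b, mul_ne_zero ha hb⟩, by rwa [smul_smul] at h⟩
      · rintro ⟨⟨a, ha⟩, h⟩
        refine ⟨a * b⁻¹, mul_ne_zero ha (inv_ne_zero hb), ?_⟩
        rw [smul_smul, mul_assoc, inv_mul_cancel₀ hb, mul_one]
        exact h
    rw [this]
    refine isOpen_iUnion fun a => ?_
    exact hNo.preimage (continuous_subtype_val.const_smul a.1)
  have hcont : Continuous (Subtype.val : zeroSet F → Projectivization ℝ V4) :=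
    continuous_induced_dom
  refine mem_of_superset ((hO.preimage hcont).mem_nhds ⟨1, one_ne_zero, by rwa [one_smul]⟩) ?_
  rintro Q ⟨a, ha, haN⟩
  have hQ0 : eval Q.1.rep F = 0 := Q.2
  have hQ1 : eval (a • Q.1.rep) F = 0 := by
    rw [eval_smul_of_isHomogeneous hF, hQ0, mul_zero]
  exact rep_mem_cone.mp ((cone_smul ha).mp (hN haN hQ1))

lemma clopen_of_loc (hF : F.IsHomogeneous 3) {A : Set (Projectivization ℝ V4)}
    (h : ∀ v, v ≠ 0 → eval v F = 0 → ∀ᶠ v' in 𝓝 v, eval v' F = 0 → (v' ∈ cone A ↔ v ∈ cone A)) :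
    @IsClopen (zeroSet F) (surfTop F) (Subtype.val ⁻¹' A) := by
  let _ : TopologicalSpace (zeroSet F) := surfTop F
  refine ⟨?_, ?_⟩
  · rw [← isOpen_compl_iff]
    have : @IsOpen (zeroSet F) (surfTop F) (Subtype.val ⁻¹' Aᶜ) := by
      refine open_of_loc hF ?_
      rintro v ⟨hv, hvA⟩ hv0
      have hvA' : v ∉ cone A := fun ⟨_, hA⟩ => hvA hA
      filter_upwards [h v hv hv0, isOpen_ne.mem_nhds hv] with z hz hz1 hz0
      exact ⟨hz1, fun hzA => hvA' ((hz hz0).mp ⟨hz1, hzA⟩)⟩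
    exact this
  · refine open_of_loc hF ?_
    intro v hv hv0
    filter_upwards [h v hv.1 hv0] with z hz hz0
    exact (hz hz0).mpr hv

lemma near_Q (hF : F.IsHomogeneous 3) {w : V4} (hw : w ≠ 0) (hw0 : eval w F = 0) {ε : ℝ}
    (hpos : ∀ y, Tri F w w y = 0 → y ∉ Submodule.span ℝ {w} → 0 < ε * Tri F w y y) :
    ∀ᶠ v in 𝓝 w, eval v F = 0 → ¬ 0 < ε * Tri F v v w := by
  by_contra hcon
  rw [not_eventually] at hcon
  obtain ⟨v, hvw, hv⟩ := exists_seq_forall_of_frequently hcon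
  push Not at hv
  have hww : 0 < w ⬝ᵥ w := by
    have h1 : 0 ≤ w ⬝ᵥ w := Finset.sum_nonneg fun i _ => mul_self_nonneg _
    exact lt_of_le_of_ne h1 fun h => hw (dotProduct_self_eq_zero.mp h.symm)
  have hT : Tri F w w w = 0 := by rw [← eval_eq_Tri hF]; exact hw0
  let lam : ℕ → ℝ := fun n => (v n ⬝ᵥ w) / (w ⬝ᵥ w)
  let y : ℕ → V4 := fun n => v n - lam n • w
  have hvy : ∀ n, v n = lam n • w + (1:ℝ) • y n := by intro n; simp [y]
  have hyw : ∀ n, y n ⬝ᵥ w = 0 := by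
    intro n
    simp only [y, sub_dotProduct, smul_dotProduct, smul_eq_mul, lam]
    field_simp
    ring
  have hlam : Tendsto lam atTop (𝓝 1) := by
    have hc : Continuous fun z : V4 => (z ⬝ᵥ w) / (w ⬝ᵥ w) := by
      unfold dotProduct
      fun_prop
    have := (hc.tendsto w).comp hvw
    rw [div_self hww.ne'] at this
    exact this
  have hy : Tendsto y atTop (𝓝 0) := by
    have := hvw.sub (hlam.smul_const w)
    simpa using this
  have hEq : ∀ n, 3 * lam n ^ 2 * Tri F w w (y n) + 3 * lam n * Tri F w (y n) (y n)
      + eval (y n) F = 0 := by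
    intro n
    have := (hv n).1
    rw [hvy n, eval_comb hF, hw0] at this
    linarith
  have hG : ∀ n, 0 < ε * (2 * lam n * Tri F w w (y n) + Tri F w (y n) (y n)) := by
    intro n
    have := (hv n).2
    rw [hvy n, Tri_comb, hT, Tri_swap23 w (y n) w, Tri_swap23 (y n) (y n) w,
      Tri_swap12 (y n) w (y n)] at this
    convert this using 2
    ring
  have hy0 : ∀ n, y n ≠ 0 := by
    intro n h0
    have := hG n
    rw [h0] at this
    have e1 : Tri F w w 0 = 0 := (TriL F w w).map_zero
    have e2 : Tri F w 0 0 = 0 := (TriL F w 0).map_zero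
    rw [e1, e2] at this
    simp at this
  let r : ℕ → ℝ := fun n => ‖y n‖
  have hr0 : ∀ n, 0 < r n := fun n => norm_pos_iff.mpr (hy0 n)
  have hr : Tendsto r atTop (𝓝 0) := by
    have := hy.norm
    simpa using this
  let z : ℕ → V4 := fun n => (r n)⁻¹ • y n
  have hyz : ∀ n, y n = r n • z n := by
    intro n
    simp only [z, smul_smul, mul_inv_cancel₀ (hr0 n).ne', one_smul]
  have hz : ∀ n, z n ∈ Metric.sphere (0 : V4) 1 := by
    intro n
    simp only [mem_sphere_zero_iff_norm, z, norm_smul, norm_inv, norm_norm, r]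
    exact inv_mul_cancel₀ (hr0 n).ne'
  obtain ⟨Z, hZ, φ, hφ, hzZ⟩ := (isCompact_sphere (0 : V4) 1).tendsto_subseq hz
  have s1 : ∀ n, Tri F w w (y n) = r n * Tri F w w (z n) := fun n =>
    (congrArg (Tri F w w) (hyz n)).trans (Tri_smul3 _ _ _ _)
  have s2 : ∀ n, Tri F w (y n) (y n) = r n * (r n * Tri F w (z n) (z n)) := fun n =>
    (congrArg (fun q => Tri F w q q) (hyz n)).trans
      ((Tri_smul2 _ _ _ _).trans (congrArg (fun q => r n * q) (Tri_smul3 _ _ _ _)))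
  have s3 : ∀ n, eval (y n) F = r n ^ 3 * eval (z n) F := fun n =>
    (congrArg (fun q => eval q F) (hyz n)).trans (eval_smul_of_isHomogeneous hF _ _)
  have hEq' : ∀ n, 3 * lam n ^ 2 * Tri F w w (z n) + 3 * lam n * r n * Tri F w (z n) (z n)
      + r n ^ 2 * eval (z n) F = 0 := by
    intro n
    have := hEq n
    rw [s1, s2, s3] at this
    have h2 : r n * (3 * lam n ^ 2 * Tri F w w (z n) + 3 * lam n * r n * Tri F w (z n) (z n)
      + r n ^ 2 * eval (z n) F) = 0 := by rw [← this]; ring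
    exact (mul_eq_zero.mp h2).resolve_left (hr0 n).ne'
  have hG' : ∀ n, 0 < lam n → ε * (3 * lam n * Tri F w (z n) (z n) + 2 * r n * eval (z n) F)
      < 0 := by
    intro n hl
    have := hG n
    rw [s1, s2] at this
    have e := hEq' n
    have h3 : 0 < 3 * lam n * (ε * (2 * lam n * (r n * Tri F w w (z n)) +
      r n * (r n * Tri F w (z n) (z n)))) :=
      mul_pos (by linarith) this
    have h4 : 3 * lam n * (ε * (2 * lam n * (r n * Tri F w w (z n)) +
      r n * (r n * Tri F w (z n) (z n)))) = r n ^ 2 * (-(ε * (3 * lam n * Tri F w (z n) (z n) +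
        2 * r n * eval (z n) F))) := by
      linear_combination (2 * ε * r n) * e
    rw [h4] at h3
    have := pos_of_mul_pos_right h3 (by positivity)
    linarith
  have hlam' := hlam.comp hφ.tendsto_atTop
  have hr' := hr.comp hφ.tendsto_atTop
  have hzl : Tendsto (fun n => Tri F w w (z (φ n))) atTop (𝓝 (Tri F w w Z)) :=
    ((Tri_continuous continuous_const continuous_const continuous_id).tendsto Z).comp hzZ
  have hzq : Tendsto (fun n => Tri F w (z (φ n)) (z (φ n))) atTop (𝓝 (Tri F w Z Z)) :=
    ((Tri_continuous continuous_const continuous_id continuous_id).tendsto Z).comp hzZ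
  have hzf : Tendsto (fun n => eval (z (φ n)) F) atTop (𝓝 (eval Z F)) :=
    ((cont_eval F).tendsto Z).comp hzZ
  have hZl : Tri F w w Z = 0 := by
    have h1 := (((hlam'.pow 2).const_mul 3).mul hzl).add
      (((hlam'.const_mul 3).mul hr').mul hzq) |>.add ((hr'.pow 2).mul hzf)
    have h2 := tendsto_nhds_unique h1 (tendsto_const_nhds (x := (0:ℝ)) |>.congr fun n => by
      simpa using (hEq' (φ n)).symm)
    simpa using h2
  have hZq : ε * Tri F w Z Z ≤ 0 := by
    have h1 := (((hlam'.const_mul 3).mul hzq).add ((hr'.const_mul 2).mul hzf)).const_mul ε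
    have h2 : ∀ᶠ n in atTop, (0:ℝ) < (lam ∘ φ) n := hlam'.eventually (lt_mem_nhds one_pos)
    have h3 := le_of_tendsto h1 (h2.mono fun n hn => (hG' (φ n) hn).le)
    simp at h3
    linarith
  have hZw : Z ⬝ᵥ w = 0 := by
    have hc : Continuous fun z : V4 => z ⬝ᵥ w := by
      unfold dotProduct
      fun_prop
    have h1 := (hc.tendsto Z).comp hzZ
    refine tendsto_nhds_unique h1 (tendsto_const_nhds.congr fun n => ?_)
    simp [z, smul_dotProduct, hyw]
  have hZ0 : Z ≠ 0 := by
    rintro rfl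
    simp at hZ
  have := hpos Z hZl (by
    intro hm
    obtain ⟨a, rfl⟩ := Submodule.mem_span_singleton.mp hm
    rw [smul_dotProduct, smul_eq_mul] at hZw
    rcases mul_eq_zero.mp hZw with h | h
    · exact hZ0 (by rw [h, zero_smul])
    · exact hww.ne' h)
  linarith

lemma definite_sign (hF : F.IsHomogeneous 3) {w : V4} (hw : w ≠ 0) (hw0 : eval w F = 0)
    (hq : ∀ y, Tri F w w y = 0 → y ∉ Submodule.span ℝ {w} → Tri F w y y ≠ 0) :
    ∃ ε : ℝ, ∀ y, Tri F w w y = 0 → y ∉ Submodule.span ℝ {w} → 0 < ε * Tri F w y y := by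
  have hT : Tri F w w w = 0 := by rw [← eval_eq_Tri hF]; exact hw0
  obtain ⟨y0, hy0, -, hy0s⟩ := exists_ker (TriL F w w) (TriL F w w) w
  rw [TriL_apply] at hy0
  refine ⟨Tri F w y0 y0, ?_⟩
  intro y hy hys
  by_contra hneg
  let f : ℝ → V4 := fun t => (1 - t) • y0 + t • y
  have hf : Continuous f := by fun_prop
  -- general expansion
  have hexp : ∀ a b : ℝ, Tri F w (a • y0 + b • y) (a • y0 + b • y) =
      a^2 * Tri F w y0 y0 + 2 * a * b * Tri F w y0 y + b^2 * Tri F w y y := by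
    intro a b
    simp only [Tri_add2, Tri_add3, Tri_smul2, Tri_smul3]
    rw [Tri_swap23 w y y0]; ring
  have h0 := hq y0 hy0 hy0s
  have h1 := hq y hy hys
  have hlt : Tri F w y0 y0 * Tri F w y y < 0 :=
    lt_of_le_of_ne (not_lt.mp hneg) (mul_ne_zero h0 h1)
  have hcont : Continuous fun t : ℝ => Tri F w (f t) (f t) := Tri_continuous continuous_const hf hf
  have hzero : (0:ℝ) ∈ (fun t : ℝ => Tri F w (f t) (f t)) '' Set.uIcc 0 1 := by
    apply intermediate_value_uIcc hcont.continuousOn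
    have e0 : f 0 = y0 := by simp [f]
    have e1 : f 1 = y := by simp [f]
    simp only [e0, e1, Set.mem_uIcc]
    rcases mul_neg_iff.mp hlt with ⟨a, b⟩ | ⟨a, b⟩
    · right; exact ⟨b.le, a.le⟩
    · left; exact ⟨a.le, b.le⟩
  obtain ⟨t, -, ht⟩ := hzero
  have hker : Tri F w w (f t) = 0 := by
    simp only [f, Tri_add3, Tri_smul3, hy0, hy]; ring
  by_cases hspan : f t ∈ Submodule.span ℝ {w}
  · obtain ⟨c, hc⟩ := Submodule.mem_span_singleton.mp hspan
    -- `(1-t) y0 + t y = c w`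
    have hall : ∀ x, Tri F w w x = 0 → Tri F w (f t) x = 0 := by
      intro x hx
      rw [← hc, Tri_smul2, hx, mul_zero]
    have e0 := hall y0 hy0
    have e1 := hall y hy
    simp only [f, Tri_add2, Tri_smul2] at e0 e1
    rw [Tri_swap23 w y y0] at e0
    -- (1-t) a + t b = 0, (1-t) b + t d = 0
    have h2 : (1 - t)^2 * Tri F w y0 y0 = t^2 * Tri F w y y := by
      linear_combination (1 - t) * e0 - t * e1
    have h3 : (1 - t)^2 * (Tri F w y0 y0)^2 = t^2 * (Tri F w y0 y0 * Tri F w y y) := by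
      linear_combination Tri F w y0 y0 * h2
    have h4 : 0 < (Tri F w y0 y0)^2 := by positivity
    have h5 : (1-t)^2 = 0 := by
      by_contra hne
      have : 0 < (1-t)^2 := lt_of_le_of_ne (sq_nonneg _) (Ne.symm hne)
      nlinarith [mul_pos this h4, sq_nonneg t]
    have h6 : t = 1 := by
      have := pow_eq_zero_iff (two_ne_zero) |>.mp h5
      linarith
    apply hys
    rw [h6] at hspan
    simpa [f] using hspan
  · exact hq _ hker hspan ht

lemma dichotomy (hF : F.IsHomogeneous 3) (Q : zeroSet F) :
    (∃ P, TripleRel F P P Q) ∨ ∃ U : Set (Projectivization ℝ V4),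
      @IsClopen (zeroSet F) (surfTop F) (Subtype.val ⁻¹' U) ∧ Q.1 ∉ U ∧
      ∃ R : zeroSet F, R.1 ∈ U ∧ TripleRel F Q Q R := by
  by_cases hex : ∃ P, TripleRel F P P Q
  · exact Or.inl hex
  right
  set w := Q.1.rep with hwdef
  have hw : w ≠ 0 := Q.1.rep_nonzero
  have hw0 : eval w F = 0 := Q.2
  have hT : Tri F w w w = 0 := by rw [← eval_eq_Tri hF]; exact hw0
  obtain ⟨ε, hε⟩ := definite_sign hF hw hw0 (by
    intro y hy hys h0
    exact hex ⟨Q, triple_self hF (LI_of_not_mem hw hys) hy h0⟩)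
  let U : Set (Projectivization ℝ V4) := {P | 0 < ε * Tri F P.rep P.rep w}
  have hU : ∀ v : V4, v ≠ 0 → (v ∈ cone U ↔ 0 < ε * Tri F v v w) := by
    intro v hv
    obtain ⟨a, ha, hav⟩ := mk_rep_smul v hv
    have : (v ∈ cone U ↔ 0 < ε * Tri F (a • v) (a • v) w) := by
      rw [← hav]
      exact ⟨fun ⟨_, h⟩ => h, fun h => ⟨hv, h⟩⟩
    rw [this, Tri_smul1, Tri_smul2, show ε * (a * (a * Tri F v v w)) =
      a^2 * (ε * Tri F v v w) by ring]
    have ha2 : 0 < a^2 := by positivity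
    exact ⟨fun h => pos_of_mul_pos_right h ha2.le, fun h => mul_pos ha2 h⟩
  have hnear := near_Q hF hw hw0 hε
  refine ⟨U, ?_, ?_, ?_⟩
  · apply clopen_of_loc hF
    intro v hv hv0
    have hcont : Continuous fun v : V4 => ε * Tri F v v w :=
      continuous_const.mul (Tri_continuous continuous_id continuous_id continuous_const)
    rcases lt_trichotomy (ε * Tri F v v w) 0 with h | h | h
    · filter_upwards [hcont.continuousAt.eventually_lt continuousAt_const h,
        isOpen_ne.mem_nhds hv] with z hz hz1 _
      rw [hU v hv, hU z hz1]
      exact ⟨fun h' => absurd h' (not_lt.mpr hz.le), fun h' => absurd h' (not_lt.mpr h.le)⟩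
    · have hε0 : ε ≠ 0 := by
        rintro rfl
        obtain ⟨y, hy, -, hys⟩ := exists_ker (TriL F w w) (TriL F w w) w
        have := hε y hy hys
        simp at this
      have hg : Tri F v v w = 0 := (mul_eq_zero.mp h).resolve_left hε0
      -- then `v` represents `Q`
      obtain ⟨a, ha, hav⟩ := mk_rep_smul v hv
      let P : zeroSet F := ⟨Projectivization.mk ℝ v hv, mk_mem_zeroSet hF hv hv0⟩
      have hPQ : P = Q := by
        by_contra hne
        refine hex ⟨P, triple_tangent hF hne ?_⟩
        show Tri F (Projectivization.mk ℝ v hv).rep (Projectivization.mk ℝ v hv).rep w = 0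
        rw [hav, Tri_smul1, Tri_smul2, hg]; ring
      have hvw : w = a • v := by
        rw [← hav, hwdef, ← hPQ]
      have htend : Tendsto (fun z : V4 => a • z) (𝓝 v) (𝓝 w) := by
        rw [hvw]
        exact (continuous_const_smul a).tendsto v
      filter_upwards [htend.eventually hnear, isOpen_ne.mem_nhds hv] with z hz hz1 hz0
      rw [hU v hv, hU z hz1, h]
      have := hz (by rw [eval_smul_of_isHomogeneous hF, hz0, mul_zero])
      rw [Tri_smul1, Tri_smul2, show ε * (a * (a * Tri F z z w)) =
        a^2 * (ε * Tri F z z w) by ring] at this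
      have ha2 : 0 < a^2 := by positivity
      exact ⟨fun h' => absurd (mul_pos ha2 h') this, fun h' => absurd h' (lt_irrefl _)⟩
    · filter_upwards [continuousAt_const.eventually_lt hcont.continuousAt h,
        isOpen_ne.mem_nhds hv] with z hz hz1 _
      rw [hU v hv, hU z hz1]
      exact ⟨fun _ => h, fun _ => hz⟩
  · show ¬ (0 < ε * Tri F w w w)
    rw [hT]; simp
  · obtain ⟨y, hy, -, hys⟩ := exists_ker (TriL F w w) (TriL F w w) w
    rw [TriL_apply] at hy
    have hLI := LI_of_not_mem hw hys
    obtain ⟨R, hR, s, t, hst⟩ := triple_third hF hLI hy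
    refine ⟨R, ?_, hR⟩
    have hQR : R ≠ Q := by
      rintro rfl
      exact hex ⟨R, hR⟩
    have ht : t ≠ 0 := by
      rintro rfl
      apply hQR
      have hs : s ≠ 0 := by
        rintro rfl
        apply R.1.rep_nonzero
        rw [hst]; simp
      apply Subtype.ext
      rw [← R.1.mk_rep, ← Q.1.mk_rep]
      exact mk_smul_eq hs _ _ (by rw [hst]; simp)
    show 0 < ε * Tri F R.1.rep R.1.rep w
    rw [hst, Tri_comb, ← hwdef, hT, Tri_swap23 w y w, hy, Tri_swap23 y y w, Tri_swap12 y w y]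
    have := hε y hy hys
    have ht2 : 0 < t^2 := by positivity
    nlinarith [mul_pos ht2 this]

end CubicSurf

namespace CubicSurf

open MvPolynomial Filter Topology

variable {F : MvPolynomial (Fin 4) ℝ}

/-- The vector-level data of the two component situation. -/
structure Setup (F : MvPolynomial (Fin 4) ℝ) (A B : Set (Projectivization ℝ V4))
    (φ : V4 →ₗ[ℝ] ℝ) : Prop where
  hF : F.IsHomogeneous 3
  locA : ∀ v, v ∈ cone A → ∀ᶠ v' in 𝓝 v, eval v' F = 0 → v' ∈ cone A
  locB : ∀ v, v ∈ cone B → ∀ᶠ v' in 𝓝 v, eval v' F = 0 → v' ∈ cone B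
  cover : ∀ v, v ≠ 0 → eval v F = 0 → v ∈ cone A ∨ v ∈ cone B
  zA : ∀ v, v ∈ cone A → eval v F = 0
  zB : ∀ v, v ∈ cone B → eval v F = 0
  disj : ∀ v, v ∈ cone A → v ∈ cone B → False
  connA : ∀ U : Set (Projectivization ℝ V4),
    (∀ v, v ≠ 0 → eval v F = 0 → ∀ᶠ v' in 𝓝 v, eval v' F = 0 → (v' ∈ cone U ↔ v ∈ cone U)) →
    ∀ x ∈ cone A, ∀ y ∈ cone A, x ∈ cone U → y ∈ cone U
  hφ : ∀ v ∈ cone B, φ v ≠ 0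

namespace Setup

variable {A B : Set (Projectivization ℝ V4)} {φ : V4 →ₗ[ℝ] ℝ}

lemma LI_AB (h : Setup F A B φ) {p x : V4} (hp : p ∈ cone B) (hx : x ∈ cone A) :
    LinearIndependent ℝ ![p, x] := by
  rw [LinearIndependent.pair_iff' hp.1]
  intro a ha
  have ha0 : a ≠ 0 := by
    rintro rfl
    exact hx.1 (by rw [← ha, zero_smul])
  exact h.disj x hx (ha ▸ (cone_smul ha0).mpr hp)

lemma no_line (h : Setup F A B φ) {p x : V4} (hp : p ∈ cone B) (hx : x ∈ cone A)
    (hl : ∀ s t : ℝ, eval (s • p + t • x) F = 0) : False := by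
  have hLI := h.LI_AB hp hx
  let f : ℝ → V4 := fun t => (1 - t) • p + t • x
  have hf : Continuous f := by fun_prop
  have hf0 : ∀ t, f t ≠ 0 := by
    intro t h0
    have := LI_comb hLI h0
    linarith [this.1, this.2]
  have hcl : IsClopen {t | f t ∈ cone A} := by
    constructor
    · rw [← isOpen_compl_iff, isOpen_iff_mem_nhds]
      intro t ht
      have hB : f t ∈ cone B := (h.cover _ (hf0 t) (hl _ _)).resolve_left ht
      filter_upwards [hf.continuousAt.eventually (h.locB _ hB)] with s hs hsA
      exact h.disj _ hsA (hs (hl _ _))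
    · rw [isOpen_iff_mem_nhds]
      intro t ht
      filter_upwards [hf.continuousAt.eventually (h.locA _ ht)] with s hs
      exact hs (hl _ _)
  have huniv := hcl.eq_univ ⟨1, by show f 1 ∈ cone A; simpa [f] using hx⟩
  have h0 : (0:ℝ) ∈ {t | f t ∈ cone A} := by rw [huniv]; trivial
  have h0' : f 0 ∈ cone A := h0
  simp [f] at h0'
  exact h.disj _ h0' hp

/-- third intersection point of the line through `p` and `x` -/
def third (F : MvPolynomial (Fin 4) ℝ) (p x : V4) : V4 :=
  (Tri F p x x) • p + (- Tri F p p x) • x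

lemma third_zero (h : Setup F A B φ) {p x : V4} (hp : p ∈ cone B) (hx : x ∈ cone A) :
    eval (third F p x) F = 0 := by
  unfold third
  rw [eval_comb h.hF, h.zA x hx, h.zB p hp]; ring

lemma third_ne (h : Setup F A B φ) {p x : V4} (hp : p ∈ cone B) (hx : x ∈ cone A) :
    third F p x ≠ 0 := by
  intro h0
  have := LI_comb (h.LI_AB hp hx) h0
  refine h.no_line hp hx fun s t => ?_
  rw [eval_comb h.hF, h.zA x hx, h.zB p hp, this.1, neg_eq_zero.mp this.2]; ring

lemma third_cont (F : MvPolynomial (Fin 4) ℝ) (p : V4) : Continuous (third F p) := by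
  unfold third
  have h1 : Continuous fun x => Tri F p x x :=
    Tri_continuous continuous_const continuous_id continuous_id
  have h2 : Continuous fun x => Tri F p p x :=
    Tri_continuous continuous_const continuous_const continuous_id
  fun_prop

lemma third_smul (p x : V4) (a : ℝ) : third F p (a • x) = a^2 • third F p x := by
  unfold third
  simp only [Tri_smul2, Tri_smul3, smul_add, smul_smul]
  congr 2 <;> ring

lemma exists_tangent (h : Setup F A B φ) {p : V4} (_hp : p ∈ cone B) :
    ∃ x ∈ cone A, Tri F p p x = 0 := by
  obtain ⟨u, hu1, hu2, hu3⟩ := exists_ker (TriL F p p) φ 0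
  obtain ⟨v, hv1, hv2, hv3⟩ := exists_ker (TriL F p p) φ u
  rw [TriL_apply] at hu1 hv1
  have hu0 : u ≠ 0 := by
    rintro rfl; exact hu3 (Submodule.zero_mem _)
  obtain ⟨s, t, hst, hroot⟩ := real_root h.hF u v
  have hq : s • u + t • v ≠ 0 := by
    intro h0
    have := LI_comb (LI_of_not_mem hu0 hv3) h0
    rcases hst with h | h
    · exact h this.1
    · exact h this.2
  refine ⟨s • u + t • v, (h.cover _ hq hroot).resolve_right ?_, ?_⟩
  · intro hB
    apply h.hφ _ hB
    simp [hu2, hv2]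
  · rw [Tri_add3, Tri_smul3, Tri_smul3, hu1, hv1]; ring

lemma third_mem (h : Setup F A B φ) {p x : V4} (hp : p ∈ cone B) (hx : x ∈ cone A) :
    third F p x ∈ cone B := by
  refine (h.cover _ (h.third_ne hp hx) (h.third_zero hp hx)).resolve_left ?_
  intro hA
  let U : Set (Projectivization ℝ V4) := {X | X.rep ∈ cone A ∧ third F p X.rep ∈ cone A}
  have hU : ∀ v : V4, v ∈ cone U ↔ v ∈ cone A ∧ third F p v ∈ cone A := by
    intro v
    constructor
    · rintro ⟨hv, h1, h2⟩
      obtain ⟨a, ha, hav⟩ := mk_rep_smul v hv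
      rw [hav] at h1 h2
      rw [third_smul] at h2
      exact ⟨(cone_smul ha).mp h1, (cone_smul (pow_ne_zero 2 ha)).mp h2⟩
    · rintro ⟨h1, h2⟩
      refine ⟨h1.1, ?_⟩
      obtain ⟨a, ha, hav⟩ := mk_rep_smul v h1.1
      show (Projectivization.mk ℝ v h1.1).rep ∈ cone A ∧
        third F p (Projectivization.mk ℝ v h1.1).rep ∈ cone A
      rw [hav, third_smul]
      exact ⟨(cone_smul ha).mpr h1, (cone_smul (pow_ne_zero 2 ha)).mpr h2⟩
  obtain ⟨x0, hx0, ht⟩ := h.exists_tangent hp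
  have hx0U : x0 ∈ cone U := by
    refine h.connA U ?_ x hx x0 hx0 ((hU x).mpr ⟨hx, hA⟩)
    intro v hv hv0
    rcases h.cover v hv hv0 with hvA | hvB
    · rcases h.cover _ (h.third_ne hp hvA) (h.third_zero hp hvA) with h3 | h3
      · filter_upwards [h.locA v hvA,
          (third_cont F p).continuousAt.eventually (h.locA _ h3)] with z hz hz3 hz0
        rw [hU, hU]
        exact ⟨fun _ => ⟨hvA, h3⟩, fun _ => ⟨hz hz0, hz3 (h.third_zero hp (hz hz0))⟩⟩
      · filter_upwards [h.locA v hvA,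
          (third_cont F p).continuousAt.eventually (h.locB _ h3)] with z hz hz3 hz0
        rw [hU, hU]
        exact ⟨fun hh => (h.disj _ hh.2 (hz3 (h.third_zero hp (hz hz0)))).elim,
          fun hh => (h.disj _ hh.2 h3).elim⟩
    · filter_upwards [h.locB v hvB] with z hz hz0
      rw [hU, hU]
      exact ⟨fun hh => (h.disj _ hh.1 (hz hz0)).elim, fun hh => (h.disj _ hh.1 hvB).elim⟩
  have h3 := ((hU x0).mp hx0U).2
  have hne := h.third_ne hp hx0
  have hform : third F p x0 = Tri F p x0 x0 • p := by simp [third, ht]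
  rw [hform] at h3 hne
  have hc : Tri F p x0 x0 ≠ 0 := by
    intro h0; apply hne; rw [h0, zero_smul]
  exact h.disj _ ((cone_smul hc).mp h3) hp

lemma g_ne (h : Setup F A B φ) {p x : V4} (hp : p ∈ cone B) (hx : x ∈ cone A) :
    Tri F p x x ≠ 0 := by
  intro h0
  have h1 := h.third_mem hp hx
  have hform : third F p x = (- Tri F p p x) • x := by simp [third, h0]
  have hne := h.third_ne hp hx
  rw [hform] at h1 hne
  have hc : - Tri F p p x ≠ 0 := by
    intro h0; apply hne; rw [h0, zero_smul]
  exact h.disj _ hx ((cone_smul hc).mp h1)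

lemma open_lemma (h : Setup F A B φ) {p x : V4} (hp : p ∈ cone B) (hx : x ∈ cone A) :
    ∀ᶠ z in 𝓝 x, ∃ τ : ℝ, z + τ • p ∈ cone A := by
  have hg := h.g_ne hp hx
  obtain ⟨r, hr, hball⟩ := Metric.eventually_nhds_iff.mp (h.locA x hx)
  have hx0 := h.zA x hx
  have hp0 := h.zB p hp
  have hexp : ∀ τ : ℝ, eval (x + τ • p) F = τ * (3 * Tri F p x x + 3 * τ * Tri F p p x) := by
    intro τ
    have := eval_comb h.hF x p 1 τ
    rw [one_smul, hx0, hp0, Tri_swap23 x x p, Tri_swap12 x p x, Tri_swap12 x p p,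
      Tri_swap23 p x p] at this
    rw [this]; ring
  -- choose τ0
  have hev : ∀ᶠ τ in 𝓝 (0:ℝ), 0 < (3 * Tri F p x x + 3 * τ * Tri F p p x) *
      (3 * Tri F p x x + 3 * (-τ) * Tri F p p x) := by
    have hc : Continuous fun τ : ℝ => (3 * Tri F p x x + 3 * τ * Tri F p p x) *
      (3 * Tri F p x x + 3 * (-τ) * Tri F p p x) := by fun_prop
    refine continuousAt_const.eventually_lt hc.continuousAt ?_
    have : 0 < (Tri F p x x)^2 := by positivity
    simp
    nlinarith
  have hev2 : ∀ᶠ τ in 𝓝 (0:ℝ), |τ| * ‖p‖ < r / 2 := by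
    have hc : Continuous fun τ : ℝ => |τ| * ‖p‖ := by fun_prop
    refine hc.continuousAt.eventually_lt continuousAt_const ?_
    simp; linarith
  obtain ⟨τ0, ⟨h1, h2⟩, hτ0⟩ := (((hev.and hev2).filter_mono nhdsWithin_le_nhds).and
    (self_mem_nhdsWithin (s := Set.Ioi (0:ℝ)))).exists
  have hτ0' : 0 < τ0 := hτ0
  have hneg : eval (x + τ0 • p) F * eval (x + (-τ0) • p) F < 0 := by
    rw [hexp, hexp]
    have := mul_pos (mul_pos hτ0' hτ0') h1
    linarith
  have hc2 : Continuous fun z : V4 => eval (z + τ0 • p) F * eval (z + (-τ0) • p) F := by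
    have := cont_eval F
    exact (this.comp (by fun_prop)).mul (this.comp (by fun_prop))
  filter_upwards [hc2.continuousAt.eventually_lt continuousAt_const hneg,
    Metric.ball_mem_nhds x (half_pos hr)] with z hz hzr
  have hcont : Continuous fun τ : ℝ => eval (z + τ • p) F :=
    (cont_eval F).comp (by fun_prop)
  have hzero : (0:ℝ) ∈ (fun τ : ℝ => eval (z + τ • p) F) '' Set.uIcc (-τ0) τ0 := by
    apply intermediate_value_uIcc hcont.continuousOn
    simp only [Set.mem_uIcc]
    rcases mul_neg_iff.mp hz with ⟨a, b⟩ | ⟨a, b⟩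
    · left; exact ⟨b.le, a.le⟩
    · right; exact ⟨a.le, b.le⟩
  obtain ⟨τ, hτ, hτz⟩ := hzero
  refine ⟨τ, hball ?_ hτz⟩
  rw [Set.uIcc_of_le (by linarith)] at hτ
  have habs : |τ| ≤ τ0 := abs_le.mpr hτ
  rw [abs_of_pos hτ0'] at h2
  have hb : |τ| * ‖p‖ ≤ τ0 * ‖p‖ := by gcongr
  rw [Metric.mem_ball, dist_eq_norm] at hzr
  rw [dist_eq_norm]
  calc ‖z + τ • p - x‖ = ‖(z - x) + τ • p‖ := by congr 1; abel
    _ ≤ ‖z - x‖ + ‖τ • p‖ := norm_add_le _ _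
    _ = ‖z - x‖ + |τ| * ‖p‖ := by rw [norm_smul, Real.norm_eq_abs]
    _ < r := by linarith

lemma compactA (h : Setup F A B φ) : IsCompact {v : V4 | ‖v‖ = 1 ∧ v ∈ cone A} := by
  have hcl : IsClosed {v : V4 | ‖v‖ = 1 ∧ v ∈ cone A} := by
    rw [← isOpen_compl_iff, isOpen_iff_mem_nhds]
    intro v hv
    by_cases h1 : ‖v‖ = 1
    · have hvA : v ∉ cone A := fun hA => hv ⟨h1, hA⟩
      have hv0 : v ≠ 0 := by rintro rfl; simp at h1
      by_cases hF0 : eval v F = 0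
      · have hB := (h.cover v hv0 hF0).resolve_left hvA
        filter_upwards [h.locB v hB] with z hz hzA
        exact h.disj z hzA.2 (hz (h.zA z hzA.2))
      · filter_upwards [(cont_eval F).continuousAt.eventually_ne hF0] with z hz hzA
        exact hz (h.zA z hzA.2)
    · filter_upwards [continuous_norm.continuousAt.eventually_ne h1] with z hz hzA
      exact hz hzA.1
  refine (isCompact_sphere (0:V4) 1).of_isClosed_subset hcl ?_
  intro v hv
  simpa using hv.1

lemma mem_span_of_not_LI {p y v : V4} (hLI : LinearIndependent ℝ ![p, y])
    (hn : ¬ LinearIndependent ℝ ![p, y, v]) : ∃ s t : ℝ, v = s • p + t • y := by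
  by_contra hcon
  apply hn
  rw [LinearIndependent.pair_iff] at hLI
  rw [Fintype.linearIndependent_iff]
  intro g hg
  simp only [Fin.sum_univ_three, Matrix.cons_val_zero, Matrix.cons_val_one,
    Matrix.cons_val_two, Matrix.head_cons, Matrix.tail_cons, Matrix.cons_val] at hg
  have h2 : g 2 = 0 := by
    by_contra h2
    apply hcon
    refine ⟨-(g 2)⁻¹ * g 0, -(g 2)⁻¹ * g 1, ?_⟩
    have hv : g 2 • v = -(g 0 • p + g 1 • y) := by
      rw [eq_neg_iff_add_eq_zero, ← hg]; abel
    have : v = (g 2)⁻¹ • (g 2 • v) := by rw [smul_smul, inv_mul_cancel₀ h2, one_smul]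
    rw [this, hv]
    module
  rw [h2, zero_smul, add_zero] at hg
  obtain ⟨h0, h1⟩ := hLI _ _ hg
  intro i
  fin_cases i
  · exact h0
  · exact h1
  · exact h2

lemma not_LI_of_mem {p y v : V4} {s t : ℝ} (hv : v = s • p + t • y) :
    ¬ LinearIndependent ℝ ![p, y, v] := by
  intro hLI
  rw [Fintype.linearIndependent_iff] at hLI
  have := hLI ![s, t, -1] (by
    simp only [Fin.sum_univ_three, Matrix.cons_val_zero, Matrix.cons_val_one, Matrix.cons_val]
    rw [hv]; module) 2
  simp at this

lemma all_lines (h : Setup F A B φ) {p y : V4} (hp : p ∈ cone B)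
    (hLI : LinearIndependent ℝ ![p, y]) : ∃ x ∈ cone A, ∃ s t : ℝ, x = s • p + t • y := by
  obtain ⟨x0, hx0, -⟩ := h.exists_tangent hp
  by_cases h3 : LinearIndependent ℝ ![p, y, x0]
  swap
  · exact ⟨x0, hx0, mem_span_of_not_LI hLI h3⟩
  let f : ℝ → V4 := fun t => (1 - t) • x0 + t • y
  have hf : Continuous f := by fun_prop
  have hfLI : ∀ t, LinearIndependent ℝ ![p, f t] := by
    intro t
    rw [LinearIndependent.pair_iff]
    intro a b hab
    rw [Fintype.linearIndependent_iff] at h3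
    have := h3 ![a, b * t, b * (1 - t)] (by
      simp only [Fin.sum_univ_three, Matrix.cons_val_zero, Matrix.cons_val_one, Matrix.cons_val]
      rw [← hab]; simp only [f]; module)
    have e0 := this 0
    have e1 := this 1
    have e2 := this 2
    simp only [Matrix.cons_val_zero, Matrix.cons_val_one, Matrix.cons_val] at e0 e1 e2
    exact ⟨e0, by linarith⟩
  let K : Set V4 := {v : V4 | ‖v‖ = 1 ∧ v ∈ cone A}
  have hK : IsCompact K := h.compactA
  let T : Set ℝ := {t | ∃ v ∈ K, ¬ LinearIndependent ℝ ![p, f t, v]}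
  have hTcl : IsClosed T := by
    haveI : CompactSpace K := isCompact_iff_compactSpace.mp hK
    let Z : Set (K × ℝ) := {q | ¬ LinearIndependent ℝ ![p, f q.2, q.1.1]}
    have hZ : IsClosed Z := by
      have hop : IsOpen {g : Fin 3 → V4 | LinearIndependent ℝ g} :=
        isOpen_setOfPred_linearIndependent
      have hc : Continuous fun q : K × ℝ => (![p, f q.2, q.1.1] : Fin 3 → V4) := by
        refine continuous_pi fun i => ?_
        fin_cases i
        · exact continuous_const
        · exact hf.comp continuous_snd
        · exact continuous_subtype_val.comp continuous_fst
      exact (hop.preimage hc).isClosed_compl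
    have := isClosedMap_snd_of_compactSpace (X := K) (Y := ℝ) Z hZ
    convert this using 1
    ext t
    constructor
    · rintro ⟨v, hv, hn⟩
      exact ⟨(⟨v, hv⟩, t), hn, rfl⟩
    · rintro ⟨⟨v, t'⟩, hn, rfl⟩
      exact ⟨v.1, v.2, hn⟩
  -- membership criterion
  have hTmem : ∀ t x, x ∈ cone A → (∃ a b : ℝ, x = a • p + b • f t) → t ∈ T := by
    rintro t x hx ⟨a, b, hab⟩
    have hn : ‖x‖ ≠ 0 := norm_ne_zero_iff.mpr hx.1
    refine ⟨‖x‖⁻¹ • x, ⟨?_, (cone_smul (inv_ne_zero hn)).mpr hx⟩,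
      not_LI_of_mem (s := ‖x‖⁻¹ * a) (t := ‖x‖⁻¹ * b) ?_⟩
    · rw [norm_smul, norm_inv, norm_norm, inv_mul_cancel₀ hn]
    · have hc : ∀ c : ℝ, c • x = (c * a) • p + (c * b) • f t := by
        intro c
        rw [hab]
        module
      exact hc _
  have h0T : (0:ℝ) ∈ T := hTmem 0 x0 hx0 ⟨0, 1, by simp [f]⟩
  have hsub : Set.Icc (0:ℝ) 1 ⊆ T := by
    refine (hTcl.inter isClosed_Icc).Icc_subset_of_forall_mem_nhdsWithin h0T ?_
    rintro t ⟨⟨v, hvK, hvn⟩, -⟩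
    apply mem_nhdsWithin_of_mem_nhds
    obtain ⟨a, b, hab⟩ := mem_span_of_not_LI (hfLI t) hvn
    have hb : b ≠ 0 := by
      rintro rfl
      rw [zero_smul, add_zero] at hab
      have ha : a ≠ 0 := by
        rintro rfl
        rw [zero_smul] at hab
        exact hvK.2.1 hab
      exact h.disj v hvK.2 (hab ▸ (cone_smul ha).mpr hp)
    have hx' : (b⁻¹ * a) • p + f t ∈ cone A := by
      have : b⁻¹ • v ∈ cone A := (cone_smul (inv_ne_zero hb)).mpr hvK.2
      rw [hab, smul_add, smul_smul, smul_smul, inv_mul_cancel₀ hb, one_smul] at this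
      exact this
    have hcont : ContinuousAt (fun t' => (b⁻¹ * a) • p + f t') t := by fun_prop
    filter_upwards [hcont.eventually (h.open_lemma hp hx')] with t' ht'
    obtain ⟨τ, hτ⟩ := ht'
    exact hTmem t' _ hτ ⟨b⁻¹ * a + τ, 1, by module⟩
  obtain ⟨v, hvK, hvn⟩ := hsub (Set.right_mem_Icc.mpr zero_le_one)
  have hf1 : f 1 = y := by simp [f]
  rw [hf1] at hvn
  exact ⟨v, hvK.2, mem_span_of_not_LI hLI hvn⟩

end Setup

end CubicSurf

namespace CubicSurf

open MvPolynomial Filter Topology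

variable {F : MvPolynomial (Fin 4) ℝ}

namespace Setup

variable {A B : Set (Projectivization ℝ V4)} {φ : V4 →ₗ[ℝ] ℝ}

/-- On a line meeting `S` in three real points, one of them in `B` and another one in `A`,
the remaining one is in `B`. -/
lemma third_B (h : Setup F A B φ) {u v : V4} {c l0 m0 l1 m1 l2 m2 : ℝ}
    (heq : ∀ s t : ℝ, eval (s • u + t • v) F =
      c * ((m0 * s - l0 * t) * (m1 * s - l1 * t) * (m2 * s - l2 * t)))
    (hp : l0 • u + m0 • v ∈ cone B) (hq : l1 • u + m1 • v ∈ cone A) :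
    l2 • u + m2 • v ∈ cone B := by
  have hm := h.third_mem hp hq
  have hn := h.third_ne hp hq
  have key : ∀ x y : ℝ, 3 * x ^ 2 * y * Tri F (l0 • u + m0 • v) (l0 • u + m0 • v) (l1 • u + m1 • v)
      + 3 * x * y ^ 2 * Tri F (l0 • u + m0 • v) (l1 • u + m1 • v) (l1 • u + m1 • v)
      = -c * (m0 * l1 - l0 * m1) ^ 2 * x * y *
        (x * (m2 * l0 - l2 * m0) + y * (m2 * l1 - l2 * m1)) := by
    intro x y
    have h1 := eval_comb h.hF (l0 • u + m0 • v) (l1 • u + m1 • v) x y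
    have h2 : x • (l0 • u + m0 • v) + y • (l1 • u + m1 • v)
        = (x * l0 + y * l1) • u + (x * m0 + y * m1) • v := by module
    rw [h2, heq, h.zB _ hp, h.zA _ hq] at h1
    linear_combination -h1
  have k1 := key 1 1
  have k2 := key 1 (-1)
  have t1 : Tri F (l0 • u + m0 • v) (l0 • u + m0 • v) (l1 • u + m1 • v)
      = -c * (m0 * l1 - l0 * m1) ^ 2 * (m2 * l0 - l2 * m0) / 3 := by
    linear_combination k1 / 6 - k2 / 6
  have t2 : Tri F (l0 • u + m0 • v) (l1 • u + m1 • v) (l1 • u + m1 • v)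
      = -c * (m0 * l1 - l0 * m1) ^ 2 * (m2 * l1 - l2 * m1) / 3 := by
    linear_combination k1 / 6 + k2 / 6
  have h3 : third F (l0 • u + m0 • v) (l1 • u + m1 • v)
      = (-c * (m0 * l1 - l0 * m1) ^ 3 / 3) • (l2 • u + m2 • v) := by
    unfold third
    rw [t1, t2]
    module
  rw [h3] at hm hn
  have hd : -c * (m0 * l1 - l0 * m1) ^ 3 / 3 ≠ 0 := by
    intro h0
    rw [h0, zero_smul] at hn
    exact hn rfl
  exact (cone_smul hd).mp hm

lemma not_BBB (h : Setup F A B φ) {u v : V4} (hLI : LinearIndependent ℝ ![u, v])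
    {c l0 m0 l1 m1 l2 m2 : ℝ} (hc : c ≠ 0)
    (heq : ∀ s t : ℝ, eval (s • u + t • v) F =
      c * ((m0 * s - l0 * t) * (m1 * s - l1 * t) * (m2 * s - l2 * t)))
    (h0 : l0 • u + m0 • v ∈ cone B) (h1 : l1 • u + m1 • v ∈ cone B)
    (h2 : l2 • u + m2 • v ∈ cone B) : False := by
  have hx : ∃ x ∈ cone A, ∃ s t : ℝ, x = s • u + t • v := by
    by_cases hl : l0 = 0
    · have hm : m0 ≠ 0 := by
        rintro rfl
        exact h0.1 (by rw [hl]; simp)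
      have hLI' : LinearIndependent ℝ ![l0 • u + m0 • v, u] := by
        rw [LinearIndependent.pair_iff]
        intro a b hab
        have := LI_comb hLI (s := a * l0 + b) (t := a * m0) (by rw [← hab]; module)
        have ha : a = 0 := by simpa [hm] using this.2
        refine ⟨ha, by simpa [ha] using this.1⟩
      obtain ⟨x, hxA, s, t, hst⟩ := h.all_lines h0 hLI'
      exact ⟨x, hxA, s * l0 + t, s * m0, by rw [hst]; module⟩
    · have hLI' : LinearIndependent ℝ ![l0 • u + m0 • v, v] := by
        rw [LinearIndependent.pair_iff]
        intro a b hab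
        have := LI_comb hLI (s := a * l0) (t := a * m0 + b) (by rw [← hab]; module)
        have ha : a = 0 := by simpa [hl] using this.1
        refine ⟨ha, by simpa [ha] using this.2⟩
      obtain ⟨x, hxA, s, t, hst⟩ := h.all_lines h0 hLI'
      exact ⟨x, hxA, s * l0, s * m0 + t, by rw [hst]; module⟩
  obtain ⟨x, hxA, s, t, rfl⟩ := hx
  have hz := h.zA _ hxA
  rw [heq] at hz
  have fin : ∀ l m : ℝ, l • u + m • v ∈ cone B → m * s - l * t = 0 → False := by
    intro l m hB h0
    have hst : s ≠ 0 ∨ t ≠ 0 := by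
      by_contra hcon
      push Not at hcon
      exact hxA.1 (by rw [hcon.1, hcon.2]; simp)
    rcases hst with hs | ht
    · have e : s • (l • u + m • v) = l • (s • u + t • v) := by
        have : m * s = l * t := by linarith
        calc s • (l • u + m • v) = (l * s) • u + (m * s) • v := by module
          _ = l • (s • u + t • v) := by rw [this]; module
      have hB' := (cone_smul hs).mpr hB
      rw [e] at hB'
      have hl : l ≠ 0 := by
        rintro rfl
        exact hB'.1 (by simp)
      exact h.disj _ hxA ((cone_smul hl).mp hB')
    · have e : t • (l • u + m • v) = m • (s • u + t • v) := by
        have : m * s = l * t := by linarith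
        calc t • (l • u + m • v) = (l * t) • u + (m * t) • v := by module
          _ = m • (s • u + t • v) := by rw [← this]; module
      have hB' := (cone_smul ht).mpr hB
      rw [e] at hB'
      have hl : m ≠ 0 := by
        rintro rfl
        exact hB'.1 (by simp)
      exact h.disj _ hxA ((cone_smul hl).mp hB')
  rcases mul_eq_zero.mp hz with hz | hz
  · exact hc hz
  rcases mul_eq_zero.mp hz with hz | hz
  · rcases mul_eq_zero.mp hz with hz | hz
    · exact fin _ _ h0 hz
    · exact fin _ _ h1 hz
  · exact fin _ _ h2 hz

lemma line_not_B (h : Setup F A B φ) {W : Submodule ℝ V4} (hW : IsLine W) (hS : LineOnSurf F W)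
    {p : V4} (hp : p ∈ cone B) (hpW : p ∈ W) : False := by
  have hev : ∀ x ∈ W, ∀ y ∈ W, ∀ s t : ℝ, eval (s • x + t • y) F = 0 := by
    intro x hx y hy s t
    have := lineRestrict_eval F x y ![s, t]
    rw [hS x y hx hy] at this
    simpa using this.symm
  have hz : ∃ z ∈ W, z ≠ 0 ∧ φ z = 0 := by
    by_contra hcon
    push Not at hcon
    have hinj : Function.Injective (φ.comp W.subtype) := by
      rw [← LinearMap.ker_eq_bot, LinearMap.ker_eq_bot']
      intro m hm
      by_contra hne
      exact hcon m.1 m.2 (fun h0 => hne (Subtype.ext h0)) hm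
    have := LinearMap.finrank_le_finrank_of_injective hinj
    unfold IsLine at hW
    rw [hW] at this
    simp at this
  obtain ⟨z, hzW, hz0, hzφ⟩ := hz
  have hzF : eval z F = 0 := by
    have := hev z hzW z hzW 1 0
    simpa using this
  have hzA : z ∈ cone A := (h.cover z hz0 hzF).resolve_right fun hB => h.hφ z hB hzφ
  exact h.no_line hp hzA (hev p hpW z hzW)

/-- A triple has an even number of points on `B`. -/
lemma parity (h : Setup F A B φ) {P Q R : zeroSet F} (ht : TripleRel F P Q R) :
    (P.1 ∈ A ∧ Q.1 ∈ A ∧ R.1 ∈ A) ∨ (P.1 ∈ A ∧ Q.1 ∈ B ∧ R.1 ∈ B) ∨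
    (P.1 ∈ B ∧ Q.1 ∈ A ∧ R.1 ∈ B) ∨ (P.1 ∈ B ∧ Q.1 ∈ B ∧ R.1 ∈ A) := by
  obtain ⟨W, hW, ⟨-, u, v, -, -, hLI, c, l, m, hne, hc, hres, hP, hQ, hR⟩ | ⟨hS, hP, hQ, hR⟩⟩ := ht
  · have heq : ∀ s t : ℝ, eval (s • u + t • v) F =
        c * ((m 0 * s - l 0 * t) * (m 1 * s - l 1 * t) * (m 2 * s - l 2 * t)) := by
      intro s t
      have := lineRestrict_eval F u v ![s, t]
      rw [hres] at this
      simp [Fin.prod_univ_three] at this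
      linarith
    have hmem : ∀ (U : Set (Projectivization ℝ V4)) k (X : zeroSet F),
        Projectivization.mk ℝ _ (hne k) = X.1 → (X.1 ∈ U ↔ l k • u + m k • v ∈ cone U) := by
      intro U k X hX
      rw [← hX]
      exact ⟨fun hh => ⟨hne k, hh⟩, fun hh => hh.2⟩
    have hcov : ∀ X : zeroSet F, X.1 ∈ A ∨ X.1 ∈ B := by
      intro X
      have := h.cover X.1.rep X.1.rep_nonzero X.2
      simpa only [rep_mem_cone] using this
    have c0 := hcov P
    have c1 := hcov Q
    have c2 := hcov R
    rw [hmem A 0 P hP, hmem B 0 P hP] at *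
    rw [hmem A 1 Q hQ, hmem B 1 Q hQ] at *
    rw [hmem A 2 R hR, hmem B 2 R hR] at *
    rcases c0 with a0 | b0 <;> rcases c1 with a1 | b1 <;> rcases c2 with a2 | b2
    · tauto
    · exact (h.disj _ a1 (h.third_B (u := u) (v := v) (c := c) (l2 := l 1) (m2 := m 1)
        (fun s t => by rw [heq]; ring) b2 a0)).elim
    · exact (h.disj _ a2 (h.third_B (u := u) (v := v) (c := c) (l2 := l 2) (m2 := m 2)
        (fun s t => by rw [heq]; ring) b1 a0)).elim
    · tauto
    · exact (h.disj _ a2 (h.third_B (u := u) (v := v) (c := c) (l2 := l 2) (m2 := m 2)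
        (fun s t => by rw [heq]) b0 a1)).elim
    · tauto
    · tauto
    · exact (h.not_BBB hLI hc heq b0 b1 b2).elim
  · left
    have : ∀ X : zeroSet F, OnLine W X.1 → X.1 ∈ A := by
      intro X hX
      rcases h.cover X.1.rep X.1.rep_nonzero X.2 with hA | hB
      · exact rep_mem_cone.mp hA
      · exact (h.line_not_B hW hS hB hX).elim
    exact ⟨this P hP, this Q hQ, this R hR⟩

end Setup

lemma setup_of (hF : F.IsHomogeneous 3) {A B : Set (Projectivization ℝ V4)}
    (hAS : A ⊆ zeroSet F) (hBS : B ⊆ zeroSet F) (hU : A ∪ B = zeroSet F) (hD : Disjoint A B)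
    (hcA : @IsConnected (zeroSet F) (surfTop F) (Subtype.val ⁻¹' A))
    (hcl : @IsClopen (zeroSet F) (surfTop F) (Subtype.val ⁻¹' A))
    (hB : ProjConvex B) : ∃ φ, Setup F A B φ := by
  obtain ⟨φ, hφ, -⟩ := hB
  have hzA : ∀ v, v ∈ cone A → eval v F = 0 := fun v hv => (mk_mem_iff hF hv.1).mp (hAS hv.2)
  have hzB : ∀ v, v ∈ cone B → eval v F = 0 := fun v hv => (mk_mem_iff hF hv.1).mp (hBS hv.2)
  have hcompl : (Subtype.val ⁻¹' B : Set (zeroSet F)) = (Subtype.val ⁻¹' A)ᶜ := by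
    ext X
    have h1 : X.1 ∈ A ∪ B := by rw [hU]; exact X.2
    have h2 : X.1 ∈ A → X.1 ∉ B := fun ha hb => Set.disjoint_left.mp hD ha hb
    simp only [Set.mem_preimage, Set.mem_compl_iff]
    rcases h1 with h1 | h1 <;> tauto
  have hBo : @IsOpen (zeroSet F) (surfTop F) (Subtype.val ⁻¹' B) := by
    rw [hcompl]
    exact (@isOpen_compl_iff _ _ (surfTop F)).mpr hcl.1
  refine ⟨φ, hF, fun v hv => loc_of_open hcl.2 hF hv (hzA v hv),
    fun v hv => loc_of_open hBo hF hv (hzB v hv), ?_, hzA, hzB, ?_, ?_, ?_⟩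
  · intro v hv h0
    have h1 : Projectivization.mk ℝ v hv ∈ A ∪ B := hU ▸ (mk_mem_iff hF hv).mpr h0
    exact h1.imp (fun h => ⟨hv, h⟩) (fun h => ⟨hv, h⟩)
  · intro v ha hb
    exact Set.disjoint_left.mp hD ha.2 hb.2
  · intro U hloc x hx y hy hxU
    have hclU := clopen_of_loc hF hloc
    let _ : TopologicalSpace (zeroSet F) := surfTop F
    have hsub := hcA.isPreconnected.subset_isClopen hclU
      ⟨⟨Projectivization.mk ℝ x hx.1, hAS hx.2⟩, hx.2, hxU.2⟩
    exact ⟨hy.1, @hsub ⟨Projectivization.mk ℝ y hy.1, hAS hy.2⟩ hy.2⟩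
  · intro v hv h0
    obtain ⟨a, ha, hav⟩ := mk_rep_smul v hv.1
    apply hφ _ hv.2
    rw [hav, map_smul, h0, smul_zero]

/-- Every class is determined by its degree and a multiple of the difference class. -/
lemma class_form (χ : zeroSet F → ZMod 2) (P₀ : zeroSet F) (β : HS F)
    (hβ : β + β = 0)
    (h0 : ∀ P, χ P = 0 → HClass F P = HClass F P₀)
    (h1 : ∀ P, χ P = 1 → HClass F P = HClass F P₀ + β) (x : GS F) :
    ∃ n : ℤ, QuotientAddGroup.mk' (Gpp F) x = degHom F x • HClass F P₀ + n • β ∧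
      FreeAbelianGroup.lift χ x = (n : ZMod 2) := by
  induction x using FreeAbelianGroup.induction_on with
  | zero => exact ⟨0, by simp, by simp⟩
  | of P =>
    have hd : degHom F (FreeAbelianGroup.of P) = 1 := by simp [degHom]
    have h2 : ∀ z : ZMod 2, z = 0 ∨ z = 1 := by decide
    rcases h2 (χ P) with hz | hz
    · exact ⟨0, by rw [hd]; exact (h0 P hz).trans (by simp), by simp [hz]⟩
    · exact ⟨1, by rw [hd]; exact (h1 P hz).trans (by simp), by simp [hz]⟩
  | neg P ih =>
    obtain ⟨n, e1, e2⟩ := ih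
    exact ⟨-n, by rw [map_neg, e1, map_neg]; module, by rw [map_neg, e2]; simp⟩
  | add x y ihx ihy =>
    obtain ⟨n, e1, e2⟩ := ihx
    obtain ⟨k, f1, f2⟩ := ihy
    exact ⟨n + k, by rw [map_add, e1, f1, map_add]; module, by rw [map_add, e2, f2]; simp⟩

lemma H0_bot_of (h : ∀ P Q : zeroSet F, HClass F P = HClass F Q) (P₀ : zeroSet F) :
    H0 F = ⊥ := by
  rw [eq_bot_iff]
  intro y hy
  obtain ⟨x, rfl⟩ := QuotientAddGroup.mk'_surjective (Gpp F) y
  obtain ⟨n, e, -⟩ := class_form (fun _ => 0) P₀ 0 (by simp) (fun P _ => h P P₀)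
    (fun P hP => absurd hP (by decide)) x
  have hd : degHom F x = 0 := hy
  rw [e, hd]
  simp

end CubicSurf

open CubicSurf MvPolynomial in
/-- Let `S` be a smooth cubic surface over `ℝ` with `S(ℝ) ≠ ∅`.
If `S(ℝ)` is connected then `H⁰_S(ℝ) = 0`.  If `S(ℝ)` has two connected components
`A` (non-convex) and `B` (convex), then for any base point `P₀ ∈ A` there is an
isomorphism `H⁰_S(ℝ) ≃ ℤ/2ℤ` sending `[P] - [P₀]` to `0` for `P ∈ A` and to `1` for
`P ∈ B`. -/
theorem H0_of_real_cubic_surface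
    (F : MvPolynomial (Fin 4) ℝ) (hF : SmoothCubic F)
    (hne : (zeroSet F).Nonempty) :
    (@ConnectedSpace (zeroSet F) (surfTop F) → H0 F = ⊥) ∧
    (∀ A B : Set (Projectivization ℝ (Fin 4 → ℝ)),
      A ⊆ zeroSet F → B ⊆ zeroSet F → A ∪ B = zeroSet F → Disjoint A B →
      @IsConnected (zeroSet F) (surfTop F) (Subtype.val ⁻¹' A) →
      @IsConnected (zeroSet F) (surfTop F) (Subtype.val ⁻¹' B) →
      @IsClopen (zeroSet F) (surfTop F) (Subtype.val ⁻¹' A) →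
      ¬ ProjConvex A → ProjConvex B →
      ∀ P₀ : zeroSet F, P₀.1 ∈ A →
        ∃ e : H0 F ≃+ ZMod 2,
          ∀ P : zeroSet F,
            (P.1 ∈ A → e (H0diff F P P₀) = 0) ∧
            (P.1 ∈ B → e (H0diff F P P₀) = 1)) := by
  have hF3 := hF.1
  obtain ⟨X₀, hX₀⟩ := hne
  constructor
  · intro hconn
    refine H0_bot_of (fun P Q => ?_) ⟨X₀, hX₀⟩
    have hall : ∀ Q : zeroSet F, ∃ P, TripleRel F P P Q := by
      intro Q
      rcases dichotomy hF3 Q with h | ⟨U, hU, hQ, R, hR, -⟩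
      · exact h
      · exfalso
        let _ : TopologicalSpace (zeroSet F) := surfTop F
        have huniv := hU.eq_univ ⟨R, hR⟩
        have : Q ∈ (Subtype.val ⁻¹' U : Set (zeroSet F)) := by rw [huniv]; trivial
        exact hQ this
    obtain ⟨P', hP'⟩ := hall P
    obtain ⟨Q', hQ'⟩ := hall Q
    exact class_eq_of_double hF3 hP' hQ'
  · intro A B hAS hBS hU hD hcA hcB hcl _ hconv P₀ hP₀
    obtain ⟨φ, hS⟩ := setup_of hF3 hAS hBS hU hD hcA hcl hconv
    have hdis : ∀ X, X ∈ A → X ∈ B → False := fun X ha hb => Set.disjoint_left.mp hD ha hb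
    have hcov : ∀ X : zeroSet F, X.1 ∈ A ∨ X.1 ∈ B := by
      intro X
      have h1 : X.1 ∈ A ∪ B := by rw [hU]; exact X.2
      exact h1
    -- all points of `A` have the same class
    have hA : ∀ P Q : zeroSet F, P.1 ∈ A → Q.1 ∈ A → HClass F P = HClass F Q := by
      have hall : ∀ Q : zeroSet F, Q.1 ∈ A → ∃ P, TripleRel F P P Q := by
        intro Q hQA
        rcases dichotomy hF3 Q with h | ⟨U, hUc, hQ, R, hR, hT⟩
        · exact h
        · exfalso
          have hRA : R.1 ∈ A := by
            rcases hS.parity hT with h | h | h | h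
            · exact h.2.2
            · exact (hdis _ hQA h.2.1).elim
            · exact (hdis _ hQA h.1).elim
            · exact h.2.2
          let _ : TopologicalSpace (zeroSet F) := surfTop F
          have hsub := hcA.isPreconnected.subset_isClopen hUc ⟨R, hRA, hR⟩
          exact hQ (@hsub Q hQA)
      intro P Q hP hQ
      obtain ⟨P', hP'⟩ := hall P hP
      obtain ⟨Q', hQ'⟩ := hall Q hQ
      exact class_eq_of_double hF3 hP' hQ'
    -- all points of `B` have the same class
    have hthird : ∀ P Q R : zeroSet F, P.1 ∈ B → Q.1 ∈ B → TripleRel F P Q R → R.1 ∈ A := by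
      intro P Q R hP hQ hT
      rcases hS.parity hT with h | h | h | h
      · exact h.2.2
      · exact (hdis _ h.1 hP).elim
      · exact (hdis _ h.2.1 hQ).elim
      · exact h.2.2
    have hB : ∀ P Q : zeroSet F, P.1 ∈ B → Q.1 ∈ B → HClass F P = HClass F Q := by
      intro P Q hP hQ
      by_cases hPQ : P = Q
      · rw [hPQ]
      obtain ⟨R, hR⟩ := triple_secant hF3 hPQ
      obtain ⟨R', hR', -⟩ := exists_common hF3 P P
      have h1 := trip_eq hR hR'
      rw [hA R R' (hthird _ _ _ hP hQ hR) (hthird _ _ _ hP hP hR')] at h1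
      exact (add_left_cancel (add_right_cancel h1)).symm
    obtain ⟨Pb, hPb⟩ := hcB.1
    classical
    let χ : zeroSet F → ZMod 2 := fun P => if P.1 ∈ B then 1 else 0
    have χA : ∀ P : zeroSet F, P.1 ∈ A → χ P = 0 := fun P hP => if_neg fun hb => hdis _ hP hb
    have χB : ∀ P : zeroSet F, P.1 ∈ B → χ P = 1 := fun P hP => if_pos hP
    have hkill : ∀ x ∈ Gpp F, FreeAbelianGroup.lift χ x = 0 := by
      intro x hx
      have hle : Gp F ≤ (FreeAbelianGroup.lift χ).ker := by
        refine (AddSubgroup.closure_le _).mpr ?_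
        rintro _ ⟨P, Q, R, hT, rfl⟩
        show FreeAbelianGroup.lift χ _ = 0
        simp only [map_add, FreeAbelianGroup.lift_apply_of]
        rcases hS.parity hT with ⟨a, b, c⟩ | ⟨a, b, c⟩ | ⟨a, b, c⟩ | ⟨a, b, c⟩
        · rw [χA _ a, χA _ b, χA _ c]; decide
        · rw [χA _ a, χB _ b, χB _ c]; decide
        · rw [χB _ a, χA _ b, χB _ c]; decide
        · rw [χB _ a, χB _ b, χA _ c]; decide
      exact hle hx.1
    let f : HS F →+ ZMod 2 := QuotientAddGroup.lift (Gpp F) (FreeAbelianGroup.lift χ) hkill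
    have hf : ∀ P, f (HClass F P) = χ P := by
      intro P
      have : f (HClass F P) = FreeAbelianGroup.lift χ (FreeAbelianGroup.of P) := rfl
      rw [this, FreeAbelianGroup.lift_apply_of]
    let g : H0 F →+ ZMod 2 := f.comp (H0 F).subtype
    have hg : ∀ P, g (H0diff F P P₀) = χ P := by
      intro P
      have : g (H0diff F P P₀) = f (HClass F P - HClass F P₀) := rfl
      rw [this, map_sub, hf, hf, χA P₀ hP₀, sub_zero]
    have hβ : (HClass F Pb - HClass F P₀) + (HClass F Pb - HClass F P₀) = 0 := by
      have := two_eq hF3 Pb P₀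
      calc _ = (HClass F Pb + HClass F Pb) - (HClass F P₀ + HClass F P₀) := by abel
        _ = 0 := by rw [this, sub_self]
    have hinj : Function.Injective g := by
      rw [injective_iff_map_eq_zero]
      rintro ⟨y, hy⟩ hgy
      obtain ⟨x, rfl⟩ := QuotientAddGroup.mk'_surjective (Gpp F) y
      obtain ⟨n, e1, e2⟩ := class_form χ P₀ (HClass F Pb - HClass F P₀) hβ
        (fun P hP => hA P P₀ ((hcov P).resolve_right fun hb => by
          rw [χB P hb] at hP
          exact absurd hP (by decide)) hP₀)
        (fun P hP => by
          rw [add_sub_cancel]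
          exact hB P Pb ((hcov P).resolve_left fun ha => by
            rw [χA P ha] at hP
            exact absurd hP (by decide)) hPb) x
      have hd : degHom F x = 0 := hy
      have hn : (n : ZMod 2) = 0 := e2.symm.trans hgy
      obtain ⟨k, hk⟩ := (ZMod.intCast_zmod_eq_zero_iff_dvd n 2).mp hn
      apply Subtype.ext
      show QuotientAddGroup.mk' (Gpp F) x = 0
      rw [e1, hd, hk, zero_smul, zero_add]
      have : ((2 : ℕ) : ℤ) * k = k + k := by push_cast; ring
      rw [this, add_smul, ← smul_add, hβ, smul_zero]
    have hsurj : Function.Surjective g := by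
      have h2 : ∀ z : ZMod 2, z = 0 ∨ z = 1 := by decide
      intro z
      rcases h2 z with rfl | rfl
      · exact ⟨0, map_zero _⟩
      · exact ⟨H0diff F Pb P₀, by rw [hg, χB Pb hPb]⟩
    refine ⟨AddEquiv.ofBijective g ⟨hinj, hsurj⟩, fun P => ⟨fun hP => ?_, fun hP => ?_⟩⟩
    · exact (hg P).trans (χA P hP)
    · exact (hg P).trans (χB P hP)
end
end

section
/- Let M be a non-zero squarefree integer and S the smooth cubic surface over Q_p given by x^3 + y^3 + z(z^2 + M w^2) = 0, where p ≠ 3 is a prime dividing M. Let C_p be the plane cubic curve x^3 + y^3 + z^3 = 0 over F_p and O̅ = (1:−1:0) ∈ C_p(F_p). Define φ: S(Q_p) → C_p(F_p) as follows: write P ∈ S(Q_p) with coprime coordinates (x:y:z:w) in Z_p; if the reduction of P modulo p is not the vertex (0:0:0:1), set φ(P) = (x̄:ȳ:z̄); if the reduction is the vertex, set φ(P) = O̅. Let ψ: S(Q_p) → Pic^0(C_p) be ψ(P) = [φ(P) − O̅]. Then ψ induces a well-defined surjective group homomorphism H_S(Q_p) → Pic^0(C_p)/2Pic^0(C_p)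 sending [P] to ψ(P) mod 2Pic^0(C_p). -/
/- Common framework: points, lines, intersection divisors, the secant-tangent span,
the groups `H_S(K)`, geometric notions over the algebraic closure, and topologies. -/

open MvPolynomial

noncomputable section

namespace CubicSurf

open MvPolynomial

variable (p : ℕ) [Fact p.Prime]

/-- The plane cubic curve `C_p : x³ + y³ + z³ = 0` over `F_p`. -/
def Gcubic : MvPolynomial (Fin 3) (ZMod p) := X 0 ^ 3 + X 1 ^ 3 + X 2 ^ 3

lemma Gcubic_hom : (Gcubic p).IsHomogeneous 3 := by
  have h : ∀ i : Fin 3, ((X i : MvPolynomial (Fin 3) (ZMod p)) ^ 3).IsHomogeneous 3 :=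
    fun i => by simpa using (isHomogeneous_X _ i).pow 3
  exact ((h 0).add (h 1)).add (h 2)

lemma O_ne_zero : (![1, -1, 0] : Fin 3 → ZMod p) ≠ 0 := by
  intro h
  have h0 := congrFun h 0
  simp at h0

lemma O_eval : eval (![1, -1, 0] : Fin 3 → ZMod p) (Gcubic p) = 0 := by
  simp [Gcubic]
  ring

/-- The flex `O = (1 : -1 : 0)` on `C_p`. -/
def OPt : zeroSet (Gcubic p) :=
  ⟨Projectivization.mk (ZMod p) ![1, -1, 0] (O_ne_zero p),
    mk_mem_zeroSet (Gcubic_hom p) (O_ne_zero p) (O_eval p)⟩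

/-- `Pic⁰(C_p)`, realized as the degree-0 part of the group of formal sums of points of
`C_p(F_p)` modulo degree-0 combinations of collinearity relations. -/
abbrev Pic0C : AddSubgroup (HS (Gcubic p)) := H0 (Gcubic p)

/-- The reduction of the first three coordinates of a primitive vector `v ∈ ℤ_p⁴`. -/
def redVec (v : Fin 4 → ℤ_[p]) : Fin 3 → ZMod p :=
  fun i => PadicInt.toZMod (v i.castSucc)

/-- `φ : S(ℚ_p) → C_p(F_p)` as specified: writing `P` with coprime coordinates
`(x:y:z:w)` in `ℤ_p`, if the reduction of `P` mod `p` is not the vertex `(0:0:0:1)`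
then `φ(P) = (x̄:ȳ:z̄)`, and otherwise `φ(P) = O`. -/
def PhiSpec (F : MvPolynomial (Fin 4) ℚ_[p])
    (φ : zeroSet F → zeroSet (Gcubic p)) : Prop :=
  ∀ (P : zeroSet F) (v : Fin 4 → ℤ_[p]) (hv : (fun i => (v i : ℚ_[p])) ≠ 0),
    Projectivization.mk ℚ_[p] (fun i => (v i : ℚ_[p])) hv = P.1 →
    (∃ i, IsUnit (v i)) →
    ((∀ h : redVec p v ≠ 0,
        (φ P).1 = Projectivization.mk (ZMod p) (redVec p v) h) ∧
      (redVec p v = 0 → (φ P).1 = (OPt p).1))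

end CubicSurf

namespace CubicSurf

section helpers

open MvPolynomial

lemma lineRestrict_change {K : Type*} [Field K] {n : ℕ} (F : MvPolynomial (Fin n) K)
    (u v : Fin n → K) (α β γ δ : K) :
    lineRestrict F (α • u + β • v) (γ • u + δ • v) =
      aeval ![C α * X 0 + C γ * X 1, C β * X 0 + C δ * X 1] (lineRestrict F u v) := by
  unfold lineRestrict
  rw [← AlgHom.comp_apply, comp_aeval]
  congr 2
  funext i
  simp only [map_add, map_mul, algHom_C, aeval_X, Matrix.cons_val_zero, Matrix.cons_val_one,
    Pi.add_apply, Pi.smul_apply, smul_eq_mul, algebraMap_eq]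
  ring

/-- three collinear points on a cubic curve containing flex `O` -/
lemma H0diff_sum_eq_zero {K : Type*} [Field K] {n : ℕ} (F : MvPolynomial (Fin n) K)
    (P Q R O : zeroSet F) (h : TripleRel F P Q R) (hO : TripleRel F O O O) :
    H0diff F P O + H0diff F Q O + H0diff F R O = 0 := by
  apply Subtype.ext
  show (HClass F P - HClass F O) + (HClass F Q - HClass F O) + (HClass F R - HClass F O) = 0
  have hm : (FreeAbelianGroup.of P + FreeAbelianGroup.of Q + FreeAbelianGroup.of R)
      - (FreeAbelianGroup.of O + FreeAbelianGroup.of O + FreeAbelianGroup.of O) ∈ Gpp F := by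
    refine AddSubgroup.mem_inf.mpr ⟨sub_mem (AddSubgroup.subset_closure ⟨P, Q, R, h, rfl⟩)
      (AddSubgroup.subset_closure ⟨O, O, O, hO, rfl⟩), ?_⟩
    simp [degHom]
  have h2 := (QuotientAddGroup.eq_zero_iff _).mpr hm
  have h3 : QuotientAddGroup.mk' (Gpp F) ((FreeAbelianGroup.of P + FreeAbelianGroup.of Q
      + FreeAbelianGroup.of R)
      - (FreeAbelianGroup.of O + FreeAbelianGroup.of O + FreeAbelianGroup.of O)) = 0 := h2
  simp only [map_sub, map_add] at h3
  unfold HClass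
  rw [← h3]
  abel

lemma modTwo_add_self {A : Type*} [AddCommGroup A] (x : ModP 2 A) : x + x = 0 := by
  induction x using QuotientAddGroup.induction_on with
  | H a =>
    rw [← QuotientAddGroup.mk_add, QuotientAddGroup.eq_zero_iff]
    exact ⟨a, by simp [two_nsmul]⟩

lemma modTwo_of_three {A : Type*} [AddCommGroup A] (a : A) (h : a + a + a = 0) :
    (QuotientAddGroup.mk a : ModP 2 A) = 0 := by
  have h1 := modTwo_add_self (QuotientAddGroup.mk a : ModP 2 A)
  have h2 : (QuotientAddGroup.mk (a + a + a) : ModP 2 A) = 0 := by rw [h]; rfl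
  rw [QuotientAddGroup.mk_add, QuotientAddGroup.mk_add, h1, zero_add] at h2
  exact h2

lemma span_pair_isLine {K : Type*} [Field K] {n : ℕ} (u v : Fin n → K)
    (h : LinearIndependent K ![u, v]) : IsLine (Submodule.span K {u, v}) := by
  unfold IsLine
  have := finrank_span_eq_card h
  rw [Matrix.range_cons_cons_empty] at this
  simpa using this

lemma lineOnSurf_span_pair {K : Type*} [Field K] {n : ℕ} (F : MvPolynomial (Fin n) K)
    (u v : Fin n → K) (h : lineRestrict F u v = 0) : LineOnSurf F (Submodule.span K {u, v}) := by
  intro x y hx hy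
  obtain ⟨α, β, rfl⟩ := Submodule.mem_span_pair.mp hx
  obtain ⟨γ, δ, rfl⟩ := Submodule.mem_span_pair.mp hy
  rw [lineRestrict_change, h, map_zero]

lemma mk_onLine {K : Type*} [Field K] {n : ℕ} (W : Submodule K (Fin n → K))
    (x : Fin n → K) (hx : x ≠ 0) : OnLine W (Projectivization.mk K x hx) ↔ x ∈ W := by
  obtain ⟨a, ha⟩ := Projectivization.exists_smul_eq_mk_rep K x hx
  unfold OnLine
  rw [← ha]
  exact Submodule.smul_mem_iff' _ _

lemma linForm_ne_zero {K : Type*} [Field K] (l m : K) (h : l ≠ 0 ∨ m ≠ 0) :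
    (C m * X 0 - C l * X 1 : MvPolynomial (Fin 2) K) ≠ 0 := by
  intro h0
  have h1 := congrArg (eval ![1, 0]) h0
  have h2 := congrArg (eval ![0, 1]) h0
  simp at h1 h2
  tauto

/-- Combining both alternatives of `TripleRel`. -/
lemma tripleRel_of {K : Type*} [Field K] {n : ℕ} (F : MvPolynomial (Fin n) K)
    (u v : Fin n → K) (hind : LinearIndependent K ![u, v]) (c : K) (l m : Fin 3 → K)
    (h : ∀ k, l k • u + m k • v ≠ 0)
    (hF : lineRestrict F u v = C c * ∏ k : Fin 3, (C (m k) * X 0 - C (l k) * X 1))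
    (P : Fin 3 → zeroSet F) (hP : ∀ k, (P k).1 = Projectivization.mk K _ (h k)) :
    TripleRel F (P 0) (P 1) (P 2) := by
  have hu : u ∈ Submodule.span K {u, v} := Submodule.subset_span (by simp)
  have hv : v ∈ Submodule.span K {u, v} := Submodule.subset_span (by simp)
  refine ⟨Submodule.span K {u, v}, span_pair_isLine u v hind, ?_⟩
  by_cases hL : LineOnSurf F (Submodule.span K {u, v})
  · right
    have : ∀ k, OnLine (Submodule.span K {u, v}) (P k).1 := by
      intro k
      rw [hP, mk_onLine]
      exact add_mem (Submodule.smul_mem _ _ hu) (Submodule.smul_mem _ _ hv)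
    exact ⟨hL, this 0, this 1, this 2⟩
  · left
    refine ⟨hL, u, v, hu, hv, hind, c, l, m, h, ?_, hF, (hP 0).symm, (hP 1).symm, (hP 2).symm⟩
    rintro rfl
    apply hL
    apply lineOnSurf_span_pair
    simpa using hF

lemma flex_tripleRel (p : ℕ) [Fact p.Prime] (T : zeroSet (Gcubic p)) (w : Fin 3 → ZMod p)
    (hw : w ≠ 0) (hw2 : w 2 = 0) (hT : T.1 = Projectivization.mk _ w hw) :
    TripleRel (Gcubic p) T T T := by
  have hG : w 0 ^ 3 + w 1 ^ 3 = 0 := by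
    have h1 : eval T.1.rep (Gcubic p) = 0 := T.2
    rw [hT] at h1
    obtain ⟨a, ha⟩ := Projectivization.exists_smul_eq_mk_rep (ZMod p) w hw
    rw [← ha, Units.smul_def, eval_smul_of_isHomogeneous (Gcubic_hom p)] at h1
    simpa [Gcubic, hw2] using h1
  refine tripleRel_of (Gcubic p) w ![0, 0, 1] ?_ (-1) (fun _ => 1) (fun _ => 0)
    (fun k => by simpa using hw) ?_ (fun _ => T) (fun k => by simp [hT])
  · rw [LinearIndependent.pair_iff]
    intro s t hst
    have ht : t = 0 := by simpa [hw2] using congrFun hst 2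
    subst ht
    simp at hst
    tauto
  · have hG' : (C (w 0) ^ 3 + C (w 1) ^ 3 : MvPolynomial (Fin 2) (ZMod p)) = 0 := by
      rw [← map_pow, ← map_pow, ← map_add, hG, map_zero]
    simp [lineRestrict, Gcubic, hw2]
    linear_combination (X 0 ^ 3) * hG'

lemma H0diff_flex (p : ℕ) [Fact p.Prime] (T : zeroSet (Gcubic p)) (w : Fin 3 → ZMod p)
    (hw : w ≠ 0) (hw2 : w 2 = 0) (hT : T.1 = Projectivization.mk _ w hw) :
    (QuotientAddGroup.mk (H0diff (Gcubic p) T (OPt p)) : ModP 2 (Pic0C p)) = 0 := by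
  apply modTwo_of_three
  exact H0diff_sum_eq_zero _ _ _ _ _ (flex_tripleRel p T w hw hw2 hT)
    (flex_tripleRel p (OPt p) _ (O_ne_zero p) (by simp) rfl)

end helpers

end CubicSurf

namespace CubicSurf

section padics

open MvPolynomial

variable {p : ℕ} [Fact p.Prime]

/-- coordinatewise coercion of a `p`-adic integer vector -/
def cz {n : ℕ} (v : Fin n → ℤ_[p]) : Fin n → ℚ_[p] := fun i => (v i : ℚ_[p])

lemma exists_primitive {n : ℕ} (v : Fin n → ℚ_[p]) (hv : v ≠ 0) :
    ∃ (κ : ℚ_[p]) (w : Fin n → ℤ_[p]) (i : Fin n), κ ≠ 0 ∧ w i = 1 ∧ v = κ • cz w := by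
  obtain ⟨j, hj⟩ : ∃ j, v j ≠ 0 := by
    by_contra! h
    exact hv (funext h)
  obtain ⟨i, -, hi⟩ := Finset.exists_max_image Finset.univ (fun i => ‖v i‖) ⟨j, Finset.mem_univ j⟩
  have hi0 : v i ≠ 0 := by
    intro h0
    have := hi j (Finset.mem_univ j)
    rw [h0, norm_zero] at this
    exact hj (norm_le_zero_iff.mp this)
  have hle : ∀ k, ‖v k / v i‖ ≤ 1 := by
    intro k
    rw [norm_div]
    exact div_le_one_of_le₀ (hi k (Finset.mem_univ k)) (norm_nonneg _)
  refine ⟨v i, fun k => ⟨v k / v i, hle k⟩, i, hi0, ?_, ?_⟩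
  · apply Subtype.ext
    simp [hi0]
  · funext k
    simp only [cz, Pi.smul_apply, smul_eq_mul]
    field_simp

lemma exists_padicInt (c : ℚ_[p]) (h : ‖c‖ ≤ 1) : ∃ d : ℤ_[p], (d : ℚ_[p]) = c :=
  ⟨⟨c, h⟩, rfl⟩

lemma coe_apply' (x : ℤ_[p]) : PadicInt.Coe.ringHom (p := p) x = (x : ℚ_[p]) := rfl

lemma line_basis (W : Submodule ℚ_[p] (Fin 4 → ℚ_[p])) (hW : IsLine W) :
    ∃ (a b : Fin 4 → ℤ_[p]) (i j : Fin 4), i ≠ 3 ∧ a i = 1 ∧ a j = 0 ∧ b i = 0 ∧ b j = 1 ∧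
      cz a ∈ W ∧ cz b ∈ W ∧ ∀ x ∈ W, x = x i • cz a + x j • cz b := by
  suffices H : ∃ (a b : Fin 4 → ℤ_[p]) (i j : Fin 4), a i = 1 ∧ a j = 0 ∧ b i = 0 ∧ b j = 1 ∧
      cz a ∈ W ∧ cz b ∈ W ∧ ∀ x ∈ W, x = x i • cz a + x j • cz b by
    obtain ⟨a, b, i, j, h1, h2, h3, h4, h5, h6, h7⟩ := H
    by_cases hi : i = 3
    · refine ⟨b, a, j, i, ?_, h4, h3, h2, h1, h6, h5, fun x hx => ?_⟩
      · rintro rfl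
        subst hi
        rw [h1] at h2
        exact one_ne_zero h2
      · rw [add_comm]; exact h7 x hx
    · exact ⟨a, b, i, j, hi, h1, h2, h3, h4, h5, h6, h7⟩
  have hfr : Module.finrank ℚ_[p] W = 2 := hW
  let e := Module.finBasisOfFinrankEq ℚ_[p] W hfr
  have hspan : ∀ x ∈ W, ∃ s t : ℚ_[p], x = s • (e 0 : Fin 4 → ℚ_[p]) + t • (e 1 : Fin 4 → ℚ_[p]) := by
    intro x hx
    refine ⟨e.repr ⟨x, hx⟩ 0, e.repr ⟨x, hx⟩ 1, ?_⟩
    have := e.sum_repr ⟨x, hx⟩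
    rw [Fin.sum_univ_two] at this
    exact (congrArg Subtype.val this).symm
  have hind : ∀ s t : ℚ_[p], s • (e 0 : Fin 4 → ℚ_[p]) + t • (e 1 : Fin 4 → ℚ_[p]) = 0 → t = 0 := by
    intro s t hst
    have hl := e.linearIndependent
    rw [Fintype.linearIndependent_iff] at hl
    have := hl ![s, t] (by
      apply Subtype.ext
      simpa [Fin.sum_univ_two] using hst) 1
    simpa using this
  have he0 : (e 0 : Fin 4 → ℚ_[p]) ≠ 0 := by
    intro h
    exact e.ne_zero 0 (Subtype.ext h)
  obtain ⟨κ, a, i, hκ, hai, hea⟩ := exists_primitive _ he0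
  have hd0 : (e 1 : Fin 4 → ℚ_[p]) - (e 1 : Fin 4 → ℚ_[p]) i • cz a ≠ 0 := by
    intro h
    have := hind (-(κ⁻¹ * (e 1 : Fin 4 → ℚ_[p]) i)) 1 (by
      rw [← h, hea, smul_smul]
      have : -(κ⁻¹ * (e 1 : Fin 4 → ℚ_[p]) i) * κ = -(e 1 : Fin 4 → ℚ_[p]) i := by field_simp
      rw [this]
      module)
    exact one_ne_zero this
  obtain ⟨μ, b, j, hμ, hbj, heb⟩ := exists_primitive _ hd0
  have haW : cz a ∈ W := by
    have : cz a = κ⁻¹ • (e 0 : Fin 4 → ℚ_[p]) := by rw [hea, smul_smul, inv_mul_cancel₀ hκ, one_smul]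
    rw [this]
    exact W.smul_mem _ (e 0).2
  have hbW : cz b ∈ W := by
    have : cz b = μ⁻¹ • ((e 1 : Fin 4 → ℚ_[p]) - (e 1 : Fin 4 → ℚ_[p]) i • cz a) := by
      rw [heb, smul_smul, inv_mul_cancel₀ hμ, one_smul]
    rw [this]
    exact W.smul_mem _ (sub_mem (e 1).2 (W.smul_mem _ haW))
  have hbi : b i = 0 := by
    have h := congrFun heb i
    simp only [Pi.sub_apply, Pi.smul_apply, cz, hai, smul_eq_mul, PadicInt.coe_one, mul_one,
      sub_self] at h
    have h' : (b i : ℚ_[p]) = 0 := by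
      rcases mul_eq_zero.mp h.symm with h | h
      · exact absurd h hμ
      · exact h
    exact Subtype.ext h'
  refine ⟨a - a j • b, b, i, j, ?_, ?_, hbi, hbj, ?_, hbW, ?_⟩
  · simp [hai, hbi]
  · simp [hbj]
  · have : cz (a - a j • b) = cz a - (a j : ℚ_[p]) • cz b := by
      funext k; simp [cz]
    rw [this]
    exact sub_mem haW (W.smul_mem _ hbW)
  · intro x hx
    obtain ⟨s, t, hst⟩ := hspan x hx
    have he1 : (e 1 : Fin 4 → ℚ_[p]) = μ • cz b + (e 1 : Fin 4 → ℚ_[p]) i • cz a := by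
      rw [← heb]; abel
    generalize (e 1 : Fin 4 → ℚ_[p]) i = ρ at he1
    have hx' : ∀ k, x k = s * (κ * (a k : ℚ_[p])) + t * (μ * (b k : ℚ_[p]) + ρ * (a k : ℚ_[p])) := by
      intro k
      rw [hst, hea, he1]
      simp [cz, mul_add]
    funext k
    simp only [Pi.add_apply, Pi.smul_apply, smul_eq_mul, cz, Pi.sub_apply, hx' i, hx' j, hx' k,
      hai, hbi, hbj, PadicInt.coe_sub, PadicInt.coe_mul, PadicInt.coe_one, PadicInt.coe_zero]
    ring

/-- the restriction of the surface equation to a line, over `ℤ_p` -/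
def LZ (M : ℤ) (a b : Fin 4 → ℤ_[p]) : MvPolynomial (Fin 2) ℤ_[p] :=
  (C (a 0) * X 0 + C (b 0) * X 1) ^ 3 + (C (a 1) * X 0 + C (b 1) * X 1) ^ 3 +
    (C (a 2) * X 0 + C (b 2) * X 1) * ((C (a 2) * X 0 + C (b 2) * X 1) ^ 2 +
      C (M : ℤ_[p]) * (C (a 3) * X 0 + C (b 3) * X 1) ^ 2)

/-- the product of linear forms, over `ℤ_p` -/
def qZ (l m : Fin 3 → ℤ_[p]) : MvPolynomial (Fin 2) ℤ_[p] :=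
  ∏ k : Fin 3, (C (m k) * X 0 - C (l k) * X 1)

/-- the surface -/
def Fsurf (p : ℕ) [Fact p.Prime] (M : ℤ) : MvPolynomial (Fin 4) ℚ_[p] :=
  X 0 ^ 3 + X 1 ^ 3 + X 2 * (X 2 ^ 2 + C ((M : ℚ_[p])) * X 3 ^ 2)

lemma map_LZ_coe (M : ℤ) (a b : Fin 4 → ℤ_[p]) :
    MvPolynomial.map (PadicInt.Coe.ringHom (p := p)) (LZ M a b) =
      lineRestrict (Fsurf p M) (cz a) (cz b) := by
  simp only [LZ, lineRestrict, Fsurf, cz, map_add, map_mul, map_pow, aeval_X, map_C, map_X,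
    map_intCast, coe_apply']

lemma map_LZ_red (M : ℤ) (hpM : (p : ℤ) ∣ M) (a b : Fin 4 → ℤ_[p]) :
    MvPolynomial.map (PadicInt.toZMod (p := p)) (LZ M a b) =
      lineRestrict (Gcubic p) (redVec p a) (redVec p b) := by
  have hM0 : (M : ZMod p) = 0 := (ZMod.intCast_zmod_eq_zero_iff_dvd M p).mpr hpM
  have h3 : (MvPolynomial.map (PadicInt.toZMod (p := p))) (C (M : ℤ_[p])) =
      (0 : MvPolynomial (Fin 2) (ZMod p)) := by
    rw [map_C, map_intCast, hM0, map_zero]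
  simp only [LZ, lineRestrict, Gcubic, redVec, map_add, map_mul, map_pow, aeval_X, h3, map_C, map_X]
  simp only [Fin.reduceCastSucc, zero_mul, add_zero]
  ring_nf

lemma toZMod_eq_zero_iff (x : ℤ_[p]) : PadicInt.toZMod x = 0 ↔ ¬ IsUnit x := by
  rw [← RingHom.mem_ker, PadicInt.ker_toZMod, IsLocalRing.mem_maximalIdeal, mem_nonunits_iff]

lemma toZMod_eq_zero_iff_dvd (x : ℤ_[p]) : PadicInt.toZMod x = 0 ↔ (p : ℤ_[p]) ∣ x := by
  rw [← RingHom.mem_ker, PadicInt.ker_toZMod, PadicInt.maximalIdeal_eq_span_p,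
    Ideal.mem_span_singleton]

lemma map_qZ_red (l m : Fin 3 → ℤ_[p]) :
    MvPolynomial.map (PadicInt.toZMod (p := p)) (qZ l m) =
      ∏ k : Fin 3, (C (PadicInt.toZMod (m k)) * X 0 - C (PadicInt.toZMod (l k)) * X 1) := by
  simp [qZ]

lemma map_qZ_red_ne_zero (l m : Fin 3 → ℤ_[p]) (h : ∀ k, IsUnit (l k) ∨ IsUnit (m k)) :
    MvPolynomial.map (PadicInt.toZMod (p := p)) (qZ l m) ≠ 0 := by
  rw [map_qZ_red, Finset.prod_ne_zero_iff]
  intro k _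
  apply linForm_ne_zero
  rw [Ne, Ne, toZMod_eq_zero_iff, toZMod_eq_zero_iff, not_not, not_not]
  exact h k

/-- Gauss lemma -/
lemma gauss (L q : MvPolynomial (Fin 2) ℤ_[p]) (c : ℚ_[p])
    (hq : MvPolynomial.map (PadicInt.toZMod (p := p)) q ≠ 0)
    (h : MvPolynomial.map (PadicInt.Coe.ringHom (p := p)) L =
      C c * MvPolynomial.map (PadicInt.Coe.ringHom (p := p)) q) :
    ∃ c' : ℤ_[p], L = C c' * q := by
  have hinj : Function.Injective (MvPolynomial.map (σ := Fin 2) (PadicInt.Coe.ringHom (p := p))) :=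
    map_injective _ Subtype.val_injective
  by_cases hc : ‖c‖ ≤ 1
  · obtain ⟨d, rfl⟩ := exists_padicInt c hc
    refine ⟨d, hinj ?_⟩
    rw [h, map_mul, map_C]
    rfl
  · exfalso
    push Not at hc
    have hc0 : c ≠ 0 := by
      rintro rfl
      simp at hc
      linarith
    have hd : ‖c⁻¹‖ < 1 := by
      rw [norm_inv]
      exact inv_lt_one_of_one_lt₀ hc
    obtain ⟨d, hdc⟩ := exists_padicInt c⁻¹ hd.le
    have hdL : C d * L = q := by
      apply hinj
      rw [map_mul, h, map_C, ← mul_assoc, ← map_mul, coe_apply', hdc, inv_mul_cancel₀ hc0,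
        map_one, one_mul]
    apply hq
    have h0 : PadicInt.toZMod d = 0 := by
      rw [toZMod_eq_zero_iff, PadicInt.isUnit_iff, PadicInt.norm_def, hdc]
      exact ne_of_lt hd
    rw [← hdL, map_mul, map_C, h0, map_zero, zero_mul]

end padics

end CubicSurf

namespace CubicSurf

section main

open MvPolynomial

variable {p : ℕ} [Fact p.Prime]

lemma cz_comb (a b : Fin 4 → ℤ_[p]) (l m : ℤ_[p]) (k : Fin 4) :
    cz (l • a + m • b) k = (l : ℚ_[p]) * (a k : ℚ_[p]) + (m : ℚ_[p]) * (b k : ℚ_[p]) := by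
  simp [cz]

lemma point_coords (W : Submodule ℚ_[p] (Fin 4 → ℚ_[p])) (a b : Fin 4 → ℤ_[p]) (i j : Fin 4)
    (hW : ∀ x ∈ W, x = x i • cz a + x j • cz b) (x : Fin 4 → ℚ_[p]) (hx : x ∈ W) (hx0 : x ≠ 0) :
    ∃ (κ : ℚ_[p]) (l m : ℤ_[p]), κ ≠ 0 ∧ (IsUnit l ∨ IsUnit m) ∧ x i = κ * l ∧ x j = κ * m ∧
      x = κ • cz (l • a + m • b) := by
  have hne : (![x i, x j] : Fin 2 → ℚ_[p]) ≠ 0 := by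
    intro h
    have h0 : x i = 0 := by simpa using congrFun h 0
    have h1 : x j = 0 := by simpa using congrFun h 1
    apply hx0
    rw [hW x hx, h0, h1]
    simp
  obtain ⟨κ, w, k, hκ, hwk, hv⟩ := exists_primitive _ hne
  have h0 : x i = κ * (w 0 : ℚ_[p]) := by simpa [cz] using congrFun hv 0
  have h1 : x j = κ * (w 1 : ℚ_[p]) := by simpa [cz] using congrFun hv 1
  refine ⟨κ, w 0, w 1, hκ, ?_, h0, h1, ?_⟩
  · fin_cases k
    · left
      have : w 0 = 1 := hwk
      simp [this]
    · right
      have : w 1 = 1 := hwk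
      simp [this]
  · funext k
    have h2 := congrFun (hW x hx) k
    rw [h2, h0, h1]
    rw [Pi.smul_apply, cz_comb]
    simp only [Pi.add_apply, Pi.smul_apply, smul_eq_mul, cz]
    ring

lemma meets_coords (F : MvPolynomial (Fin 4) ℚ_[p]) (W : Submodule ℚ_[p] (Fin 4 → ℚ_[p]))
    (a b : Fin 4 → ℤ_[p]) (i j : Fin 4)
    (hW : ∀ x ∈ W, x = x i • cz a + x j • cz b)
    (P Q R : Projectivization ℚ_[p] (Fin 4 → ℚ_[p])) (h : MeetsIn F W P Q R) :
    ∃ (c : ℚ_[p]) (l m : Fin 3 → ℤ_[p]) (hne : ∀ k, cz (l k • a + m k • b) ≠ 0),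
      (∀ k, IsUnit (l k) ∨ IsUnit (m k)) ∧
      lineRestrict F (cz a) (cz b) =
        C c * MvPolynomial.map (PadicInt.Coe.ringHom (p := p)) (qZ l m) ∧
      ∀ k, ![P, Q, R] k = Projectivization.mk _ _ (hne k) := by
  obtain ⟨u, v, hu, hv, hind, c, l, m, hne, hc, hF, hP, hQ, hR⟩ := h
  rw [LinearIndependent.pair_iff] at hind
  have hu' := hW u hu
  have hv' := hW v hv
  have hΔ : u i * v j - u j * v i ≠ 0 := by
    intro h0
    have e1 : v j • u + (-u j) • v = 0 := by
      funext k
      have h1 := congrFun hu' k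
      have h2 := congrFun hv' k
      simp only [Pi.add_apply, Pi.smul_apply, smul_eq_mul, Pi.zero_apply] at h1 h2 ⊢
      rw [h1, h2]
      linear_combination (cz a k) * h0
    have e2 : v i • u + (-u i) • v = 0 := by
      funext k
      have h1 := congrFun hu' k
      have h2 := congrFun hv' k
      simp only [Pi.add_apply, Pi.smul_apply, smul_eq_mul, Pi.zero_apply] at h1 h2 ⊢
      rw [h1, h2]
      linear_combination (-cz b k) * h0
    have hj : u j = 0 := by simpa using (hind _ _ e1).2
    have hi : u i = 0 := by simpa using (hind _ _ e2).2
    have : u = 0 := by rw [hu', hi, hj]; simp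
    have := hind 1 0 (by rw [this]; simp)
    exact one_ne_zero this.1
  set Δ := u i * v j - u j * v i with hΔdef
  have ha : cz a = (v j / Δ) • u + (-u j / Δ) • v := by
    funext k
    have h1 := congrFun hu' k
    have h2 := congrFun hv' k
    simp only [Pi.add_apply, Pi.smul_apply, smul_eq_mul] at h1 h2 ⊢
    rw [h1, h2]
    field_simp
    rw [hΔdef]; ring
  have hb : cz b = (-v i / Δ) • u + (u i / Δ) • v := by
    funext k
    have h1 := congrFun hu' k
    have h2 := congrFun hv' k
    simp only [Pi.add_apply, Pi.smul_apply, smul_eq_mul] at h1 h2 ⊢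
    rw [h1, h2]
    field_simp
    rw [hΔdef]; ring
  have hpt : ∀ k, ∃ (κ : ℚ_[p]) (l' m' : ℤ_[p]), κ ≠ 0 ∧ (IsUnit l' ∨ IsUnit m') ∧
      (l k • u + m k • v) i = κ * l' ∧ (l k • u + m k • v) j = κ * m' ∧
      (l k • u + m k • v) = κ • cz (l' • a + m' • b) := fun k =>
    point_coords W a b i j hW _ (add_mem (W.smul_mem _ hu) (W.smul_mem _ hv)) (hne k)
  choose κ l' m' hκ hun hi hj hx using hpt
  have hne' : ∀ k, cz (l' k • a + m' k • b) ≠ 0 := by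
    intro k h0
    apply hne k
    rw [hx k, h0, smul_zero]
  refine ⟨c * ∏ k, (κ k / Δ), l', m', hne', hun, ?_, ?_⟩
  · rw [ha, hb, lineRestrict_change, hF]
    have hfac : ∀ k, (C (m k) * (C (v j / Δ) * X 0 + C (-v i / Δ) * X 1)
        - C (l k) * (C (-u j / Δ) * X 0 + C (u i / Δ) * X 1) : MvPolynomial (Fin 2) ℚ_[p]) =
        C (κ k / Δ) * (C (m' k : ℚ_[p]) * X 0 - C (l' k : ℚ_[p]) * X 1) := by
      intro k
      have h1 := hi k
      have h2 := hj k
      simp only [Pi.add_apply, Pi.smul_apply, smul_eq_mul] at h1 h2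
      have g1 : m k * (v j / Δ) - l k * (-u j / Δ) = κ k / Δ * m' k := by
        field_simp
        linear_combination h2
      have g2 : m k * (-v i / Δ) - l k * (u i / Δ) = - (κ k / Δ * l' k) := by
        field_simp
        linear_combination -h1
      have g1' := congrArg (C (σ := Fin 2)) g1
      have g2' := congrArg (C (σ := Fin 2)) g2
      simp only [map_sub, map_mul, map_neg] at g1' g2'
      linear_combination X 0 * g1' + X 1 * g2'
    simp only [map_mul, map_prod, map_sub, algHom_C, aeval_X, Matrix.cons_val_zero,
      Matrix.cons_val_one, algebraMap_eq, hfac, qZ, map_C, map_X, coe_apply',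
      Finset.prod_mul_distrib]
    ring
  · have hmk : ∀ k, Projectivization.mk ℚ_[p] _ (hne k) = Projectivization.mk ℚ_[p] _ (hne' k) := by
      intro k
      rw [Projectivization.mk_eq_mk_iff']
      exact ⟨κ k, (hx k).symm⟩
    intro k
    rw [← hmk]
    fin_cases k
    · exact hP.symm
    · exact hQ.symm
    · exact hR.symm

lemma redVec_comb (a b : Fin 4 → ℤ_[p]) (l m : ℤ_[p]) :
    redVec p (l • a + m • b) =
      PadicInt.toZMod l • redVec p a + PadicInt.toZMod m • redVec p b := by
  funext k
  simp [redVec]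

/-- coefficient comparison -/
lemma coeffs (M : ℤ) (a b : Fin 4 → ℤ_[p]) (ha : a 3 = 0) (hb : b 3 = 1) (c : ℤ_[p])
    (l m : Fin 3 → ℤ_[p]) (h : LZ M a b = C c * qZ l m) :
    3 * (a 0 * b 0 ^ 2 + a 1 * b 1 ^ 2 + a 2 * b 2 ^ 2) + M * a 2 =
      c * (m 0 * l 1 * l 2 + l 0 * m 1 * l 2 + l 0 * l 1 * m 2) ∧
    b 0 ^ 3 + b 1 ^ 3 + b 2 ^ 3 + M * b 2 = - (c * (l 0 * l 1 * l 2)) := by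
  have e1 := congrArg (eval ![1, 0]) h
  have e2 := congrArg (eval ![0, 1]) h
  have e3 := congrArg (eval ![1, 1]) h
  have e4 := congrArg (eval ![1, -1]) h
  simp [LZ, qZ, Fin.prod_univ_three, ha, hb] at e1 e2 e3 e4
  constructor
  · have h2 : (2 : ℤ_[p]) ≠ 0 := two_ne_zero
    apply mul_left_cancel₀ h2
    linear_combination e3 + e4 - 2 * e1
  · linear_combination e2

lemma core (M : ℤ) (hM : Squarefree M) (hpM : (p : ℤ) ∣ M)
    (φ : zeroSet (Fsurf p M) → zeroSet (Gcubic p)) (hφ : PhiSpec p (Fsurf p M) φ)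
    (a b : Fin 4 → ℤ_[p]) (i j : Fin 4) (hi3 : i ≠ 3) (hai : a i = 1) (haj : a j = 0)
    (hbi : b i = 0) (hbj : b j = 1) (l m : Fin 3 → ℤ_[p])
    (hne : ∀ k, cz (l k • a + m k • b) ≠ 0) (hun : ∀ k, IsUnit (l k) ∨ IsUnit (m k))
    (c : ℤ_[p]) (hL : LZ M a b = C c * qZ l m)
    (P : Fin 3 → zeroSet (Fsurf p M)) (hP : ∀ k, (P k).1 = Projectivization.mk _ _ (hne k)) :
    (QuotientAddGroup.mk (H0diff (Gcubic p) (φ (P 0)) (OPt p)) : ModP 2 (Pic0C p)) +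
      QuotientAddGroup.mk (H0diff (Gcubic p) (φ (P 1)) (OPt p)) +
      QuotientAddGroup.mk (H0diff (Gcubic p) (φ (P 2)) (OPt p)) = 0 := by
  have hspec : ∀ k, (∀ h : redVec p (l k • a + m k • b) ≠ 0,
        (φ (P k)).1 = Projectivization.mk (ZMod p) (redVec p (l k • a + m k • b)) h) ∧
      (redVec p (l k • a + m k • b) = 0 → (φ (P k)).1 = (OPt p).1) := by
    intro k
    refine hφ (P k) (l k • a + m k • b) (hne k) (hP k).symm ?_
    rcases hun k with h | h
    · exact ⟨i, by simpa [hai, hbi] using h⟩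
    · exact ⟨j, by simpa [haj, hbj] using h⟩
  obtain ⟨i', rfl⟩ : ∃ i' : Fin 3, i = i'.castSucc := ⟨i.castPred hi3, by simp⟩
  have hra : redVec p a i' = 1 := by simp [redVec, hai]
  have hrb : redVec p b i' = 0 := by simp [redVec, hbi]
  have hra0 : redVec p a ≠ 0 := by
    intro h0
    rw [h0] at hra
    exact zero_ne_one hra
  by_cases hcase : j = 3 ∧ redVec p b = 0
  · obtain ⟨rfl, hb0⟩ := hcase
    set D : Fin 3 → ModP 2 (Pic0C p) :=
      fun k => QuotientAddGroup.mk (H0diff (Gcubic p) (φ (P k)) (OPt p)) with hD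
    change D 0 + D 1 + D 2 = 0
    have hred : ∀ k, redVec p (l k • a + m k • b) = PadicInt.toZMod (l k) • redVec p a := by
      intro k
      rw [redVec_comb, hb0, smul_zero, add_zero]
    have hD0 : ∀ k, PadicInt.toZMod (l k) = 0 → D k = 0 := by
      intro k hk
      have h1 : φ (P k) = OPt p := by
        apply Subtype.ext
        apply (hspec k).2
        rw [hred, hk, zero_smul]
      simp only [hD, h1]
      have : H0diff (Gcubic p) (OPt p) (OPt p) = 0 := Subtype.ext (sub_self _)
      rw [this]
      rfl
    have hT : ∀ k, PadicInt.toZMod (l k) ≠ 0 →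
        (φ (P k)).1 = Projectivization.mk _ (redVec p a) hra0 := by
      intro k hk
      have hk' : redVec p (l k • a + m k • b) ≠ 0 := by
        rw [hred]
        exact smul_ne_zero hk hra0
      rw [(hspec k).1 hk', Projectivization.mk_eq_mk_iff']
      exact ⟨_, (hred k).symm⟩
    have hDeq : ∀ k k', PadicInt.toZMod (l k) ≠ 0 → PadicInt.toZMod (l k') ≠ 0 → D k = D k' := by
      intro k k' hk hk'
      have : φ (P k) = φ (P k') := Subtype.ext ((hT k hk).trans (hT k' hk').symm)
      simp only [hD, this]
    by_cases hall : ∀ k, PadicInt.toZMod (l k) = 0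
    · rw [hD0 0 (hall 0), hD0 1 (hall 1), hD0 2 (hall 2)]
      simp
    push Not at hall
    obtain ⟨k₀, hk₀⟩ := hall
    by_cases ha2 : redVec p a 2 = 0
    · have hDz : ∀ k, D k = 0 := by
        intro k
        by_cases hk : PadicInt.toZMod (l k) = 0
        · exact hD0 k hk
        · exact H0diff_flex p _ _ hra0 ha2 (hT k hk)
      rw [hDz, hDz, hDz]
      simp
    -- the generic case
    have hGa : eval (redVec p a) (Gcubic p) = 0 := by
      have h1 : eval (φ (P k₀)).1.rep (Gcubic p) = 0 := (φ (P k₀)).2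
      rw [hT k₀ hk₀] at h1
      obtain ⟨s, hs⟩ := Projectivization.exists_smul_eq_mk_rep (ZMod p) _ hra0
      rw [← hs, Units.smul_def, eval_smul_of_isHomogeneous (Gcubic_hom p)] at h1
      rcases mul_eq_zero.mp h1 with h1 | h1
      · exact absurd h1 (pow_ne_zero _ s.ne_zero)
      · exact h1
    have hc0 : PadicInt.toZMod c = 0 := by
      have h1 := congrArg (MvPolynomial.map (PadicInt.toZMod (p := p))) hL
      rw [map_LZ_red M hpM, hb0, map_mul, map_C] at h1
      have h2 : lineRestrict (Gcubic p) (redVec p a) 0 = 0 := by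
        have h3 : (C (redVec p a 0) ^ 3 + C (redVec p a 1) ^ 3 + C (redVec p a 2) ^ 3 :
            MvPolynomial (Fin 2) (ZMod p)) = 0 := by
          rw [← map_pow, ← map_pow, ← map_pow, ← map_add, ← map_add]
          have : redVec p a 0 ^ 3 + redVec p a 1 ^ 3 + redVec p a 2 ^ 3 = 0 := by
            simpa [Gcubic] using hGa
          rw [this, map_zero]
        simp [lineRestrict, Gcubic]
        linear_combination (X 0 ^ 3) * h3
      rw [h2] at h1
      rcases mul_eq_zero.mp h1.symm with h4 | h4
      · exact C_eq_zero.mp h4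
      · exact absurd h4 (map_qZ_red_ne_zero l m hun)
    obtain ⟨c', rfl⟩ := (toZMod_eq_zero_iff_dvd c).mp hc0
    obtain ⟨M', rfl⟩ := hpM
    have hbd : ∀ k : Fin 3, ∃ b', b k.castSucc = p * b' := fun k =>
      (toZMod_eq_zero_iff_dvd _).mp (congrFun hb0 k)
    obtain ⟨b0, hb0'⟩ := hbd 0
    obtain ⟨b1, hb1'⟩ := hbd 1
    obtain ⟨b2, hb2'⟩ := hbd 2
    have hb0'' : b 0 = p * b0 := hb0'
    have hb1'' : b 1 = p * b1 := hb1'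
    have hb2'' : b 2 = p * b2 := hb2'
    obtain ⟨E1, E2⟩ := coeffs _ a b haj hbj _ l m hL
    rw [hb0'', hb1'', hb2''] at E1 E2
    push_cast at E1 E2
    have hp0 : (p : ℤ_[p]) ≠ 0 := by exact_mod_cast (Fact.out : p.Prime).ne_zero
    have hpz : PadicInt.toZMod (p : ℤ_[p]) = 0 := by simp
    have F1 : p * (3 * (a 0 * b0 ^ 2 + a 1 * b1 ^ 2 + a 2 * b2 ^ 2)) + M' * a 2 =
      c' * (m 0 * l 1 * l 2 + l 0 * m 1 * l 2 + l 0 * l 1 * m 2) := by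
      apply mul_left_cancel₀ hp0
      linear_combination E1
    have F2 : p * (p * (b0 ^ 3 + b1 ^ 3 + b2 ^ 3) + M' * b2) = -(c' * (l 0 * l 1 * l 2)) := by
      apply mul_left_cancel₀ hp0
      linear_combination E2
    have G1 := congrArg (PadicInt.toZMod (p := p)) F1
    have G2 := congrArg (PadicInt.toZMod (p := p)) F2
    simp only [map_add, map_mul, map_neg, hpz, zero_mul, zero_add, map_intCast] at G1 G2
    have hM' : (M' : ZMod p) ≠ 0 := by
      intro h0
      obtain ⟨N, rfl⟩ := (ZMod.intCast_zmod_eq_zero_iff_dvd M' p).mp h0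
      have := hM p ⟨N, by ring⟩
      rw [Int.isUnit_iff_natAbs_eq] at this
      exact (Fact.out : p.Prime).one_lt.ne' (by simpa using this)
    have ha2' : PadicInt.toZMod (a 2) ≠ 0 := ha2
    have hlhs := mul_ne_zero hM' ha2'
    rw [G1] at hlhs
    have hcne := left_ne_zero_of_mul hlhs
    have hsum := right_ne_zero_of_mul hlhs
    have hprod : PadicInt.toZMod (l 0) * PadicInt.toZMod (l 1) * PadicInt.toZMod (l 2) = 0 := by
      rcases mul_eq_zero.mp (neg_eq_zero.mp G2.symm) with h | h
      · exact absurd h hcne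
      · exact h
    by_cases h0 : PadicInt.toZMod (l 0) = 0
    · have h1 : PadicInt.toZMod (l 1) ≠ 0 := fun h => hsum (by rw [h0, h]; ring)
      have h2 : PadicInt.toZMod (l 2) ≠ 0 := fun h => hsum (by rw [h0, h]; ring)
      rw [hD0 0 h0, hDeq 1 2 h1 h2, zero_add, modTwo_add_self]
    · by_cases h1 : PadicInt.toZMod (l 1) = 0
      · have h2 : PadicInt.toZMod (l 2) ≠ 0 := fun h => hsum (by rw [h1, h]; ring)
        rw [hD0 1 h1, hDeq 0 2 h0 h2, add_zero, modTwo_add_self]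
      · have h2 : PadicInt.toZMod (l 2) = 0 := by
          rcases mul_eq_zero.mp hprod with h | h
          · exact absurd h (mul_ne_zero h0 h1)
          · exact h
        rw [hD0 2 h2, hDeq 0 1 h0 h1, add_zero, modTwo_add_self]
  · have hind : LinearIndependent (ZMod p) ![redVec p a, redVec p b] := by
      rw [LinearIndependent.pair_iff]
      intro s t hst
      have hs : s = 0 := by simpa [hra, hrb] using congrFun hst i'
      subst hs
      refine ⟨rfl, ?_⟩
      by_cases hj : j = 3
      · have hb : redVec p b ≠ 0 := fun h => hcase ⟨hj, h⟩
        rw [zero_smul, zero_add] at hst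
        exact (smul_eq_zero.mp hst).resolve_right hb
      · obtain ⟨j', rfl⟩ : ∃ j' : Fin 3, j = j'.castSucc := ⟨j.castPred hj, by simp⟩
        have : redVec p b j' = 1 := by simp [redVec, hbj]
        simpa [this] using congrFun hst j'
    have hnz : ∀ k, PadicInt.toZMod (l k) • redVec p a + PadicInt.toZMod (m k) • redVec p b ≠ 0 := by
      intro k h0
      have h1 := LinearIndependent.pair_iff.mp hind _ _ h0
      rw [toZMod_eq_zero_iff, toZMod_eq_zero_iff] at h1
      rcases hun k with h | h
      · exact h1.1 h
      · exact h1.2 h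
    have hrel : TripleRel (Gcubic p) (φ (P 0)) (φ (P 1)) (φ (P 2)) := by
      refine tripleRel_of (Gcubic p) (redVec p a) (redVec p b) hind (PadicInt.toZMod c)
        (fun k => PadicInt.toZMod (l k)) (fun k => PadicInt.toZMod (m k)) hnz ?_
        (fun k => φ (P k)) ?_
      · rw [← map_LZ_red M hpM, hL, map_mul, map_C, map_qZ_red]
      · intro k
        have h1 := (hspec k).1
        simp only [redVec_comb] at h1
        exact h1 (hnz k)
    rw [← QuotientAddGroup.mk_add, ← QuotientAddGroup.mk_add,
      H0diff_sum_eq_zero _ _ _ _ _ hrel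
        (flex_tripleRel p (OPt p) _ (O_ne_zero p) (by simp) rfl)]
    rfl

lemma psi_triple (M : ℤ) (hM : Squarefree M) (hpM : (p : ℤ) ∣ M)
    (φ : zeroSet (Fsurf p M) → zeroSet (Gcubic p)) (hφ : PhiSpec p (Fsurf p M) φ)
    (P Q R : zeroSet (Fsurf p M)) (h : TripleRel (Fsurf p M) P Q R) :
    (QuotientAddGroup.mk (H0diff (Gcubic p) (φ P) (OPt p)) : ModP 2 (Pic0C p)) +
      QuotientAddGroup.mk (H0diff (Gcubic p) (φ Q) (OPt p)) +
      QuotientAddGroup.mk (H0diff (Gcubic p) (φ R) (OPt p)) = 0 := by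
  obtain ⟨W, hline, hor⟩ := h
  obtain ⟨a, b, i, j, hi3, hai, haj, hbi, hbj, haW, hbW, hW⟩ := line_basis W hline
  rcases hor with ⟨-, hmeet⟩ | ⟨hon, hP, hQ, hR⟩
  · obtain ⟨c, l, m, hne, hun, hF, hpt⟩ := meets_coords _ W a b i j hW _ _ _ hmeet
    rw [← map_LZ_coe] at hF
    obtain ⟨c', hc'⟩ := gauss _ _ c (map_qZ_red_ne_zero l m hun) hF
    refine core M hM hpM φ hφ a b i j hi3 hai haj hbi hbj l m hne hun c' hc' ![P, Q, R] ?_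
    intro k
    rw [← hpt k]
    fin_cases k <;> rfl
  · have hpt : ∀ k, ∃ (κ : ℚ_[p]) (l' m' : ℤ_[p]), κ ≠ 0 ∧ (IsUnit l' ∨ IsUnit m') ∧
      (![P, Q, R] k).1.rep i = κ * l' ∧ (![P, Q, R] k).1.rep j = κ * m' ∧
      (![P, Q, R] k).1.rep = κ • cz (l' • a + m' • b) := by
      intro k
      refine point_coords W a b i j hW _ ?_ (Projectivization.rep_nonzero _)
      fin_cases k
      · exact hP
      · exact hQ
      · exact hR
    choose κ l m hκ hun _ _ hx using hpt
    have hne : ∀ k, cz (l k • a + m k • b) ≠ 0 := by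
      intro k h0
      apply Projectivization.rep_nonzero (![P, Q, R] k).1
      rw [hx k, h0, smul_zero]
    have hLZ : LZ M a b = C 0 * qZ l m := by
      apply map_injective (PadicInt.Coe.ringHom (p := p)) Subtype.val_injective
      rw [map_LZ_coe, hon _ _ haW hbW]
      simp
    refine core M hM hpM φ hφ a b i j hi3 hai haj hbi hbj l m hne hun 0 hLZ ![P, Q, R] ?_
    intro k
    rw [← Projectivization.mk_rep (![P, Q, R] k).1, Projectivization.mk_eq_mk_iff']
    exact ⟨κ k, (hx k).symm⟩

lemma hensel_cube (hp3 : p ≠ 3) (x A : ℤ_[p]) (hx : PadicInt.toZMod x ≠ 0)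
    (h : PadicInt.toZMod (x ^ 3 + A) = 0) :
    ∃ z : ℤ_[p], z ^ 3 + A = 0 ∧ PadicInt.toZMod z = PadicInt.toZMod x := by
  have h3 : PadicInt.toZMod (3 * x ^ 2) ≠ 0 := by
    rw [map_mul, map_pow]
    refine mul_ne_zero ?_ (pow_ne_zero _ hx)
    have : PadicInt.toZMod (3 : ℤ_[p]) = ((3 : ℕ) : ZMod p) := by
      rw [← map_natCast (PadicInt.toZMod (p := p))]; norm_num
    rw [this, Ne, ZMod.natCast_eq_zero_iff]
    intro hd
    exact hp3 ((Nat.prime_dvd_prime_iff_eq Fact.out Nat.prime_three).mp hd)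
  have hlt : ∀ y : ℤ_[p], PadicInt.toZMod y = 0 ↔ ‖y‖ < 1 := by
    intro y
    rw [toZMod_eq_zero_iff, PadicInt.not_isUnit_iff]
  have hn : ‖3 * x ^ 2‖ = 1 := by
    rw [Ne, toZMod_eq_zero_iff, not_not, PadicInt.isUnit_iff] at h3
    exact h3
  have hd : (Polynomial.X ^ 3 + Polynomial.C A : Polynomial ℤ_[p]).derivative.aeval x
      = 3 * x ^ 2 := by
    simp
    norm_num
  have hv : (Polynomial.X ^ 3 + Polynomial.C A : Polynomial ℤ_[p]).aeval x = x ^ 3 + A := by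
    simp
  obtain ⟨z, hz1, hz2, -⟩ := hensels_lemma (p := p)
    (F := (Polynomial.X ^ 3 + Polynomial.C A : Polynomial ℤ_[p])) (a := x) (by
      rw [hd, hn, hv, one_pow]
      exact (hlt _).mp h)
  rw [hd, hn] at hz2
  refine ⟨z, by simpa using hz1, ?_⟩
  have := (hlt _).mpr hz2
  rwa [map_sub, sub_eq_zero] at this

lemma phi_surj (hp3 : p ≠ 3) (M : ℤ)
    (φ : zeroSet (Fsurf p M) → zeroSet (Gcubic p)) (hφ : PhiSpec p (Fsurf p M) φ)
    (hFh : (Fsurf p M).IsHomogeneous 3)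
    (T : zeroSet (Gcubic p)) : ∃ P, φ P = T := by
  have key : ∀ v : Fin 4 → ℤ_[p], v 3 = 0 → v 0 ^ 3 + v 1 ^ 3 + v 2 ^ 3 = 0 →
      redVec p v = T.1.rep → ∃ P, φ P = T := by
    intro v h3 heq hred
    have hr0 : redVec p v ≠ 0 := hred ▸ T.1.rep_nonzero
    obtain ⟨k, hk⟩ : ∃ k, redVec p v k ≠ 0 := by
      by_contra! h
      exact hr0 (funext h)
    have hku : IsUnit (v k.castSucc) := by
      by_contra hnu
      exact hk ((toZMod_eq_zero_iff _).mpr hnu)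
    have hv0 : cz v ≠ 0 := by
      intro h0
      have h1 : (v k.castSucc : ℚ_[p]) = 0 := congrFun h0 k.castSucc
      have h2 : v k.castSucc = 0 := Subtype.ext h1
      exact hku.ne_zero h2
    have hF : eval (cz v) (Fsurf p M) = 0 := by
      have h1 := congrArg (fun x : ℤ_[p] => (x : ℚ_[p])) heq
      simp at h1
      simp [Fsurf, cz, h3]
      linear_combination h1
    refine ⟨⟨Projectivization.mk _ _ hv0, mk_mem_zeroSet hFh hv0 hF⟩, ?_⟩
    apply Subtype.ext
    rw [(hφ _ v hv0 rfl ⟨_, hku⟩).1 hr0]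
    simp only [hred]
    exact Projectivization.mk_rep _
  set w := T.1.rep with hw
  have hG : w 0 ^ 3 + w 1 ^ 3 + w 2 ^ 3 = 0 := by
    have h1 : eval T.1.rep (Gcubic p) = 0 := T.2
    simpa [Gcubic] using h1
  obtain ⟨x0, hx0⟩ := ZMod.ringHom_surjective (PadicInt.toZMod (p := p)) (w 0)
  obtain ⟨x1, hx1⟩ := ZMod.ringHom_surjective (PadicInt.toZMod (p := p)) (w 1)
  obtain ⟨x2, hx2⟩ := ZMod.ringHom_surjective (PadicInt.toZMod (p := p)) (w 2)
  by_cases h0 : w 0 = 0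
  · by_cases h1 : w 1 = 0
    · exfalso
      have h2 : w 2 = 0 := by simpa [h0, h1] using hG
      apply T.1.rep_nonzero
      funext k
      fin_cases k
      · exact h0
      · exact h1
      · exact h2
    · obtain ⟨z, hz, hzr⟩ := hensel_cube hp3 x1 (x0 ^ 3 + x2 ^ 3) (by rwa [hx1]) (by
        simp only [map_add, map_pow, hx0, hx1, hx2]
        linear_combination hG)
      refine key ![x0, z, x2, 0] (by simp) (by simp; linear_combination hz) ?_
      funext k
      fin_cases k
      · exact hx0
      · exact hzr.trans hx1
      · exact hx2
  · obtain ⟨z, hz, hzr⟩ := hensel_cube hp3 x0 (x1 ^ 3 + x2 ^ 3) (by rwa [hx0]) (by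
        simp only [map_add, map_pow, hx0, hx1, hx2]
        linear_combination hG)
    refine key ![z, x1, x2, 0] (by simp) (by simp; linear_combination hz) ?_
    funext k
    fin_cases k
    · exact hzr.trans hx0
    · exact hx1
    · exact hx2

lemma Fsurf_hom (M : ℤ) : (Fsurf p M).IsHomogeneous 3 := by
  have hX : ∀ i : Fin 4, (X i : MvPolynomial (Fin 4) ℚ_[p]).IsHomogeneous 1 :=
    fun i => isHomogeneous_X _ i
  have h3 : ∀ i : Fin 4, ((X i : MvPolynomial (Fin 4) ℚ_[p]) ^ 3).IsHomogeneous 3 :=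
    fun i => by simpa using (hX i).pow 3
  have h2 : ∀ i : Fin 4, ((X i : MvPolynomial (Fin 4) ℚ_[p]) ^ 2).IsHomogeneous 2 :=
    fun i => by simpa using (hX i).pow 2
  have hC : (C (M : ℚ_[p]) * X 3 ^ 2 : MvPolynomial (Fin 4) ℚ_[p]).IsHomogeneous 2 := by
    have := (isHomogeneous_C (Fin 4) (M : ℚ_[p])).mul (h2 3)
    rwa [zero_add] at this
  exact ((h3 0).add (h3 1)).add ((hX 2).mul ((h2 2).add hC))

/-- the homomorphism from formal sums to the degree zero part -/
def theta {K : Type*} [Field K] {n : ℕ} (F : MvPolynomial (Fin n) K) (O : zeroSet F) :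
    GS F →+ H0 F := FreeAbelianGroup.lift fun P => H0diff F P O

lemma theta_coe {K : Type*} [Field K] {n : ℕ} (F : MvPolynomial (Fin n) K) (O : zeroSet F)
    (y : GS F) : (theta F O y : HS F) = QuotientAddGroup.mk' (Gpp F) y - degHom F y • HClass F O := by
  induction y using FreeAbelianGroup.induction_on with
  | zero => simp
  | of P => simp [theta, H0diff, degHom, HClass]
  | neg P h =>
    rw [map_neg, map_neg, map_neg, neg_smul, AddSubgroup.coe_neg, h]
    abel
  | add x y hx hy =>
    rw [map_add, map_add, map_add, add_smul, AddSubgroup.coe_add, hx, hy]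
    abel

lemma theta_surj {K : Type*} [Field K] {n : ℕ} (F : MvPolynomial (Fin n) K) (O : zeroSet F) :
    Function.Surjective (theta F O) := by
  rintro ⟨x, hx⟩
  obtain ⟨y, rfl⟩ := QuotientAddGroup.mk'_surjective (Gpp F) x
  refine ⟨y, Subtype.ext ?_⟩
  have hdeg : degHom F y = 0 := hx
  rw [theta_coe, hdeg, zero_smul, sub_zero]

end main

end CubicSurf

open CubicSurf MvPolynomial in
/-- Let `M` be a non-zero squarefree integer, `p ≠ 3` a prime dividing
`M`, and `S : x³ + y³ + z(z² + M w²) = 0` over `ℚ_p`.  Let `C_p : x³ + y³ + z³ = 0` over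
`F_p` and `O = (1:-1:0)`.  Let `φ : S(ℚ_p) → C_p(F_p)` be as specified (reduction of a
primitive coordinate vector, sending the points reducing to the vertex to `O`), and let
`ψ(P) = [φ(P) - O] ∈ Pic⁰(C_p)`.  Then `ψ` induces a well-defined surjective group
homomorphism `H_S(ℚ_p) → Pic⁰(C_p)/2Pic⁰(C_p)` sending `[P]` to `ψ(P) mod 2Pic⁰(C_p)`. -/
theorem H_to_pic0_mod_two_SM
    (p : ℕ) [Fact p.Prime] (hp3 : p ≠ 3)
    (M : ℤ) (hM : Squarefree M) (hMne : M ≠ 0) (hpM : (p : ℤ) ∣ M)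
    (F : MvPolynomial (Fin 4) ℚ_[p])
    (hFdef : F = X 0 ^ 3 + X 1 ^ 3 +
      X 2 * (X 2 ^ 2 + C ((M : ℚ_[p])) * X 3 ^ 2))
    (φ : zeroSet F → zeroSet (Gcubic p)) (hφ : PhiSpec p F φ) :
    ∃ h : HS F →+ ModP 2 (Pic0C p),
      Function.Surjective h ∧
      ∀ P : zeroSet F,
        h (HClass F P) = QuotientAddGroup.mk (H0diff (Gcubic p) (φ P) (OPt p)) := by
  obtain rfl : F = Fsurf p M := hFdef
  have hker : ∀ x ∈ Gpp (Fsurf p M), FreeAbelianGroup.lift (fun P : zeroSet (Fsurf p M) =>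
      (QuotientAddGroup.mk (H0diff (Gcubic p) (φ P) (OPt p)) : ModP 2 (Pic0C p))) x = 0 := by
    intro x hx
    have hx' : x ∈ Gp (Fsurf p M) := hx.1
    clear hx
    unfold Gp at hx'
    induction hx' using AddSubgroup.closure_induction with
    | mem x h =>
      obtain ⟨P, Q, R, hT, rfl⟩ := h
      simp only [map_add, FreeAbelianGroup.lift_apply_of]
      exact psi_triple M hM hpM φ hφ P Q R hT
    | zero => simp
    | add x y _ _ h1 h2 => rw [map_add, h1, h2, add_zero]
    | neg x _ h1 => rw [map_neg, h1, neg_zero]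
  refine ⟨QuotientAddGroup.lift (Gpp (Fsurf p M)) (FreeAbelianGroup.lift
    (fun P : zeroSet (Fsurf p M) =>
      (QuotientAddGroup.mk (H0diff (Gcubic p) (φ P) (OPt p)) : ModP 2 (Pic0C p)))) hker, ?_, ?_⟩
  · intro x
    obtain ⟨d, rfl⟩ := QuotientAddGroup.mk_surjective x
    obtain ⟨y, rfl⟩ := theta_surj (Gcubic p) (OPt p) d
    rw [← Set.mem_range, ← AddMonoidHom.coe_range, SetLike.mem_coe]
    induction y using FreeAbelianGroup.induction_on with
    | zero => rw [map_zero]; exact zero_mem _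
    | of T =>
      obtain ⟨P, rfl⟩ := phi_surj hp3 M φ hφ (Fsurf_hom M) T
      refine ⟨HClass _ P, ?_⟩
      have h1 : theta (Gcubic p) (OPt p) (FreeAbelianGroup.of (φ P)) =
          H0diff (Gcubic p) (φ P) (OPt p) := FreeAbelianGroup.lift_apply_of _ _
      rw [h1]
      exact FreeAbelianGroup.lift_apply_of _ P
    | neg T h => rw [map_neg, QuotientAddGroup.mk_neg]; exact neg_mem h
    | add x y hx hy => rw [map_add, QuotientAddGroup.mk_add]; exact add_mem hx hy
  · intro P
    exact FreeAbelianGroup.lift_apply_of _ P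
end
end
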